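/- arXiv:1602.01630 — 2 statements merged into one kernel-verified Lean document; each statement's English description precedes it below -/
import Mathlib

section
/- Let n ≥ 2, let 0 < δ₀ < 1, and let Q > Q₀(n, δ₀) be a sufficiently large integer. Suppose x₀ ∈ [-1/2, 1/2] is such that every nonzero polynomial P ∈ ℤ[t] with deg P ≤ n - 1 and H(P) ≤ Q satisfying |P(x₀)| < Q^{-n+1} also satisfies |P'(x₀)| ≥ δ₀·Q. Then there exists a monic polynomial P ∈ ℤ[t] of degree n, irreducible over ℚ, such that: (i) n!·δ₀^{-(n-1)}·Q^{-n+1} ≤ |P(x₀)| ≤ 2·n!·(2n+1)·δ₀^{-(n-1)}·Q^{-n+1}; (ii) |P'(x₀)| ≥ n!·Q; (iii) H(P) ≤ 6·(n+1)!·δ₀^{-(n-1)}·Q; and (iv) P has a real root α with |x₀ - α| ≤ n·(2n+1)·δ₀^{-(n-1)}·Q^{-n}. -/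
open Polynomial

/-- Covering: a lattice with all nonzero vectors of sup norm at least `1` covers space with
sup-balls of radius the covolume. -/
theorem aux_cover_span {ι : Type*} [Fintype ι] [DecidableEq ι]
    (b : Module.Basis ι ℝ (ι → ℝ))
    (hmin : ∀ v ∈ Submodule.span ℤ (Set.range b), v ≠ 0 → 1 ≤ ‖v‖)
    (h : ℕ) (hh : |(Matrix.of b).det| < (h : ℝ) + 1) (y : ι → ℝ) :
    ∃ v ∈ Submodule.span ℤ (Set.range b), ‖y - v‖ ≤ h := by
  classical
  by_contra hcon
  push Not at hcon
  set L := Submodule.span ℤ (Set.range b) with hL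
  let S : Set (ι → ℝ) := (L : Set (ι → ℝ))
  have hne : S.Nonempty := ⟨0, L.zero_mem⟩
  have hy : (h : ℝ) ≤ Metric.infDist y S := by
    rw [Metric.le_infDist hne]
    intro v hv
    rw [dist_eq_norm]
    exact (hcon v hv).le
  have htrans : ∀ u : ι → ℝ, ∀ v ∈ L, Metric.infDist (u + v) S ≤ Metric.infDist u S := by
    intro u v hv
    rw [Metric.le_infDist hne]
    intro w hw
    have := Metric.infDist_le_dist_of_mem (x := u + v) (s := S) (L.add_mem hw hv)
    simpa using this
  have hcont : Continuous (fun t : ℝ => Metric.infDist (t • y) S) :=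
    (Metric.continuous_infDist_pt S).comp (by fun_prop)
  have hpts : ∀ i : Fin (h + 1), ∃ u : ι → ℝ, Metric.infDist u S = (i : ℕ) := by
    intro i
    have h0 : Metric.infDist ((0 : ℝ) • y) S = 0 := by
      rw [zero_smul]; exact Metric.infDist_zero_of_mem L.zero_mem
    have hmem : ((i : ℕ) : ℝ) ∈ Set.Icc (Metric.infDist ((0 : ℝ) • y) S)
        (Metric.infDist ((1 : ℝ) • y) S) := by
      rw [h0, one_smul]
      refine ⟨by positivity, le_trans ?_ hy⟩
      exact_mod_cast Nat.lt_succ_iff.mp i.2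
    obtain ⟨t, _, ht⟩ := intermediate_value_Icc (zero_le_one (α := ℝ)) hcont.continuousOn hmem
    exact ⟨t • y, ht⟩
  choose u hu using hpts
  have hsep : ∀ i j : Fin (h + 1), i ≠ j → ∀ v ∈ L, 1 ≤ dist (u i) (u j + v) := by
    have key : ∀ i j : Fin (h + 1), ∀ v ∈ L,
        ((i : ℕ) : ℝ) - ((j : ℕ) : ℝ) ≤ dist (u i) (u j + v) := by
      intro i j v hv
      have h1 := Metric.infDist_le_infDist_add_dist (s := S) (x := u i) (y := u j + v)
      have h2 := htrans (u j) v hv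
      rw [hu] at h1 h2
      linarith
    intro i j hij v hv
    rcases lt_or_gt_of_ne hij with hlt | hlt
    · have := key j i (-v) (L.neg_mem hv)
      have hd : dist (u j) (u i + -v) = dist (u i) (u j + v) := by
        rw [dist_comm, dist_eq_norm, dist_eq_norm]; congr 1; abel
      rw [hd] at this
      have h3 : ((i : ℕ) : ℝ) + 1 ≤ ((j : ℕ) : ℝ) := by exact_mod_cast hlt
      linarith
    · have := key i j v hv
      have h3 : ((j : ℕ) : ℝ) + 1 ≤ ((i : ℕ) : ℝ) := by exact_mod_cast hlt
      linarith
  let T : Set (ι → ℝ) := ⋃ i : Fin (h + 1), Metric.ball (u i) (1 / 2)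
  have hT : MeasureTheory.volume T = ((h + 1 : ℕ) : ENNReal) := by
    have hdisj : Pairwise (Function.onFun Disjoint fun i => Metric.ball (u i) (1 / 2)) := by
      intro i j hij
      apply Metric.ball_disjoint_ball
      have := hsep i j hij 0 L.zero_mem
      simp only [add_zero] at this
      linarith
    rw [MeasureTheory.measure_iUnion hdisj (fun i => Metric.isOpen_ball.measurableSet)]
    simp [Real.volume_pi_ball]
  have hlt : MeasureTheory.volume (ZSpan.fundamentalDomain b) < MeasureTheory.volume T := by
    rw [hT, ZSpan.volume_fundamentalDomain]
    rw [ENNReal.ofReal_lt_natCast (by omega)]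
    push_cast
    exact hh
  have hTm : MeasurableSet T :=
    MeasurableSet.iUnion fun i => Metric.isOpen_ball.measurableSet
  have : Countable (Submodule.span ℤ (Set.range b)).toAddSubgroup :=
    inferInstanceAs (Countable (Submodule.span ℤ (Set.range b)))
  obtain ⟨v, w, hvw, hnd⟩ := MeasureTheory.exists_pair_mem_lattice_not_disjoint_vadd
    (ZSpan.isAddFundamentalDomain' b MeasureTheory.volume) hTm.nullMeasurableSet hlt
  rw [Set.not_disjoint_iff] at hnd
  obtain ⟨z, hz1, hz2⟩ := hnd
  rw [Set.mem_vadd_set] at hz1 hz2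
  obtain ⟨p, hp, rfl⟩ := hz1
  obtain ⟨q, hq, hqe⟩ := hz2
  change (w : ι → ℝ) + q = (v : ι → ℝ) + p at hqe
  obtain ⟨i, hi⟩ := Set.mem_iUnion.mp hp
  obtain ⟨j, hj⟩ := Set.mem_iUnion.mp hq
  rw [Metric.mem_ball] at hi hj
  -- p = q + (w - v)
  have hpq : p = q + ((w : ι → ℝ) - v) := by
    have : p = (v : ι → ℝ) + p - v := by abel
    rw [this, ← hqe]; abel
  have hd : dist (u i) (u j + ((w : ι → ℝ) - v)) < 1 := by
    have h1 : dist p (u j + ((w : ι → ℝ) - v)) < 1 / 2 := by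
      rw [hpq]; simpa using hj
    have h2 := dist_triangle_left (u i) (u j + ((w : ι → ℝ) - v)) p
    linarith
  by_cases hij : i = j
  · subst hij
    have h1 := hmin ((w : ι → ℝ) - v) (L.sub_mem w.2 v.2)
      (sub_ne_zero.mpr fun hE => hvw (Subtype.ext hE.symm))
    rw [dist_self_add_right] at hd
    linarith
  · have := hsep i j hij _ (L.sub_mem w.2 v.2)
    linarith

theorem aux_cover {ι : Type*} [Fintype ι] [DecidableEq ι] [Nonempty ι]
    (A : Matrix ι ι ℝ) (hA : 0 < A.det)
    (hmin : ∀ m : ι → ℤ, m ≠ 0 → 1 ≤ ‖∑ i, m i • A i‖) (y : ι → ℝ) :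
    ∃ m : ι → ℤ, ‖y - ∑ i, m i • A i‖ ≤ A.det := by
  have hli := Matrix.linearIndependent_rows_of_det_ne_zero hA.ne'
  let b := basisOfLinearIndependentOfCardEqFinrank hli (by simp)
  have hb : (b : ι → ι → ℝ) = fun i => A i :=
    coe_basisOfLinearIndependentOfCardEqFinrank hli (by simp)
  have hdet : |(Matrix.of b).det| = A.det := by
    rw [hb]
    exact abs_of_pos hA
  obtain ⟨v, hv, hvy⟩ := aux_cover_span b (by
    intro v hv hv0
    obtain ⟨c, rfl⟩ := (Submodule.mem_span_range_iff_exists_fun ℤ).mp hv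
    rw [hb] at hv0 ⊢
    apply hmin
    rintro rfl
    simp at hv0) ⌊A.det⌋₊ (by rw [hdet]; exact Nat.lt_floor_add_one _) y
  obtain ⟨c, rfl⟩ := (Submodule.mem_span_range_iff_exists_fun ℤ).mp hv
  rw [hb] at hvy
  exact ⟨c, hvy.trans (Nat.floor_le hA.le)⟩
/-- A polynomial with controlled coefficients, small value and large derivative has a close root. -/
theorem aux_root (n : ℕ) (P : ℝ[X]) (hdeg : P.natDegree ≤ n) (H : ℝ)
    (hH : ∀ j, |P.coeff j| ≤ H) (x₀ η K : ℝ) (hx : |x₀| ≤ 1 / 2) (hη : 0 ≤ η) (hη' : η ≤ 1 / 2)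
    (hK : 2 * K ≤ P.derivative.eval x₀) (hKH : (n + 1) * n ^ 2 * H * η ≤ K)
    (h0 : 0 ≤ P.eval x₀) (h1 : P.eval x₀ ≤ K * η) :
    ∃ α, P.eval α = 0 ∧ |x₀ - α| ≤ η := by
  have hH0 : 0 ≤ H := (abs_nonneg _).trans (hH 0)
  have hbox : ∀ x ∈ Set.Icc (x₀ - η) x₀, |x| ≤ 1 := by
    intro x hx'
    rw [abs_le] at hx ⊢
    constructor <;> linarith [hx'.1, hx'.2]
  have hP2 : ∀ x, |x| ≤ 1 → |P.derivative.derivative.eval x| ≤ (n + 1) * n ^ 2 * H := by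
    intro x hx'
    rw [Polynomial.eval_eq_sum_range' (n := n + 1)
      (by have := Polynomial.natDegree_derivative_le P
          have := Polynomial.natDegree_derivative_le P.derivative
          omega)]
    calc |∑ i ∈ Finset.range (n + 1), P.derivative.derivative.coeff i * x ^ i|
        ≤ ∑ i ∈ Finset.range (n + 1), |P.derivative.derivative.coeff i * x ^ i| :=
          Finset.abs_sum_le_sum_abs _ _
      _ ≤ ∑ i ∈ Finset.range (n + 1), (n : ℝ) ^ 2 * H := by
          apply Finset.sum_le_sum
          intro i _
          rw [abs_mul, abs_pow]
          have hp : |x| ^ i ≤ 1 := pow_le_one₀ (abs_nonneg x) hx'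
          have hc : |P.derivative.derivative.coeff i| ≤ (n : ℝ) ^ 2 * H := by
            rw [Polynomial.coeff_derivative, Polynomial.coeff_derivative]
            by_cases hi : i + 2 ≤ n
            · rw [abs_mul, abs_mul]
              have hi' : (i : ℝ) + 2 ≤ n := by exact_mod_cast hi
              have e1 : |((i + 1 : ℕ) : ℝ) + 1| ≤ n := by
                push_cast
                rw [abs_of_nonneg (by positivity)]; linarith
              have e2 : |(i : ℝ) + 1| ≤ n := by
                rw [abs_of_nonneg (by positivity)]; linarith
              calc _ ≤ H * n * n := by gcongr; exact hH _
                _ = _ := by ring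
            · rw [Polynomial.coeff_eq_zero_of_natDegree_lt (by omega)]
              simp only [zero_mul, abs_zero]; positivity
          calc _ ≤ |P.derivative.derivative.coeff i| * 1 := by gcongr
            _ ≤ _ := by rw [mul_one]; exact hc
      _ = _ := by simp; ring
  have hder : ∀ x ∈ Set.Icc (x₀ - η) x₀, K ≤ P.derivative.eval x := by
    intro x hx'
    have := (convex_Icc (x₀ - η) x₀).norm_image_sub_le_of_norm_hasDerivWithin_le
      (f := fun x => P.derivative.eval x) (f' := fun x => P.derivative.derivative.eval x)
      (C := (n + 1) * n ^ 2 * H)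
      (fun z _ => (P.derivative.hasDerivAt z).hasDerivWithinAt)
      (fun z hz => hP2 z (hbox z hz)) (x := x) (y := x₀) hx' ⟨by linarith, le_refl _⟩
    rw [Real.norm_eq_abs, Real.norm_eq_abs] at this
    have h2 : |x₀ - x| ≤ η := by rw [abs_le]; constructor <;> linarith [hx'.1, hx'.2]
    have h3 : (n + 1) * n ^ 2 * H * |x₀ - x| ≤ (n + 1) * n ^ 2 * H * η := by gcongr
    have h4 := le_abs_self (P.derivative.eval x₀ - P.derivative.eval x)
    linarith
  have hneg : P.eval (x₀ - η) ≤ 0 := by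
    have := (convex_Icc (x₀ - η) x₀).mul_sub_le_image_sub_of_le_deriv
      (f := fun x => P.eval x) P.continuous.continuousOn P.differentiable.differentiableOn
      (C := K) (fun z hz => by
        rw [Polynomial.deriv]; exact hder z (interior_subset hz))
      (x₀ - η) ⟨le_refl _, by linarith⟩ x₀ ⟨by linarith, le_refl _⟩ (by linarith)
    have e : x₀ - (x₀ - η) = η := by ring
    rw [e] at this
    linarith
  obtain ⟨α, hα, hα0⟩ := intermediate_value_Icc (by linarith : x₀ - η ≤ x₀)
    (P.continuous.continuousOn) (⟨hneg, h0⟩ : (0 : ℝ) ∈ Set.Icc _ _)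
  exact ⟨α, hα0, by rw [abs_le]; constructor <;> linarith [hα.1, hα.2]⟩

theorem aux_s (N : ℕ) (hN : 1 ≤ N) : ∃ s : ℝ, 1 ≤ s ∧
    ∑ j : Fin N, ((j : ℕ) + 1 : ℝ) * (1 / 2) ^ (j : ℕ) ≤ s ∧
    8 * s ^ N ≤ (Nat.factorial (N + 1) : ℝ) * (4 * N + 5) := by
  have hsum : ∀ M : ℕ, ∑ j : Fin M, ((j : ℕ) + 1 : ℝ) * (1 / 2) ^ (j : ℕ)
      = 4 - (2 * M + 4) * (1 / 2) ^ M := by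
    intro M
    rw [Fin.sum_univ_eq_sum_range (fun j => ((j : ℕ) + 1 : ℝ) * (1 / 2) ^ j)]
    induction M with
    | zero => norm_num
    | succ k ih => rw [Finset.sum_range_succ, ih]; push_cast; ring
  rw [hsum]
  rcases Nat.lt_or_ge N 4 with h | h
  · interval_cases N
    · exact ⟨1, by norm_num, by norm_num, by norm_num [Nat.factorial]⟩
    · exact ⟨2, by norm_num, by norm_num, by norm_num [Nat.factorial]⟩
    · exact ⟨3, by norm_num, by norm_num, by norm_num [Nat.factorial]⟩
  · refine ⟨4, by norm_num, ?_, ?_⟩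
    · have : (0 : ℝ) ≤ (2 * N + 4) * (1 / 2) ^ N := by positivity
      linarith
    · induction N, h using Nat.le_induction with
      | base => norm_num [Nat.factorial]
      | succ k hk ih =>
        have ih' := ih (by omega)
        rw [Nat.factorial_succ (k + 1)]
        push_cast
        have hk' : (4 : ℝ) ≤ k := by exact_mod_cast hk
        have hf : (0 : ℝ) < (Nat.factorial (k + 1) : ℝ) := by positivity
        calc (8 : ℝ) * 4 ^ (k + 1) = 4 * (8 * 4 ^ k) := by ring
          _ ≤ 4 * ((Nat.factorial (k + 1) : ℝ) * (4 * k + 5)) := by gcongr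
          _ = (Nat.factorial (k + 1) : ℝ) * (4 * (4 * k + 5)) := by ring
          _ ≤ (Nat.factorial (k + 1) : ℝ) * ((k + 1 + 1) * (4 * (k + 1) + 5)) := by
              gcongr ?_ * ?_; nlinarith
          _ = _ := by ring

/-- The integer polynomial `a + m₀ X + ... + m_{N-1} X^N`. -/
noncomputable def auxPoly {N : ℕ} (a : ℤ) (m : Fin N → ℤ) : ℤ[X] :=
  C a + ∑ j : Fin N, C (m j) * X ^ ((j : ℕ) + 1)

theorem auxPoly_coeff_zero {N : ℕ} (a : ℤ) (m : Fin N → ℤ) : (auxPoly a m).coeff 0 = a := by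
  simp [auxPoly, Polynomial.coeff_X_pow]

theorem auxPoly_coeff_succ {N : ℕ} (a : ℤ) (m : Fin N → ℤ) (j : Fin N) :
    (auxPoly a m).coeff ((j : ℕ) + 1) = m j := by
  simp only [auxPoly, coeff_add, coeff_C_succ, Polynomial.finsetSum_coeff, coeff_C_mul,
    Polynomial.coeff_X_pow, zero_add]
  rw [Finset.sum_eq_single j]
  · simp
  · intro i _ hi
    rw [if_neg, mul_zero]
    intro h
    exact hi (Fin.ext (by omega))
  · simp

theorem auxPoly_natDegree {N : ℕ} (a : ℤ) (m : Fin N → ℤ) : (auxPoly a m).natDegree ≤ N := by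
  unfold auxPoly
  refine (natDegree_add_le _ _).trans (max_le (by simp) ?_)
  apply natDegree_sum_le_of_forall_le
  intro i _
  exact (natDegree_C_mul_X_pow_le _ _).trans i.2

theorem auxPoly_coeff_cases {N : ℕ} (a : ℤ) (m : Fin N → ℤ) (p : ℤ → Prop) (h0 : p 0) (ha : p a)
    (hm : ∀ j, p (m j)) (k : ℕ) : p ((auxPoly a m).coeff k) := by
  rcases k with _ | k
  · rw [auxPoly_coeff_zero]; exact ha
  · by_cases hk : k < N
    · have := auxPoly_coeff_succ a m ⟨k, hk⟩
      simp only at this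
      rw [this]; exact hm _
    · rw [coeff_eq_zero_of_natDegree_lt (by have := auxPoly_natDegree a m; omega)]
      exact h0

theorem auxPoly_aeval {N : ℕ} (a : ℤ) (m : Fin N → ℤ) (x : ℝ) :
    aeval x (auxPoly a m) = a + ∑ j : Fin N, (m j : ℝ) * x ^ ((j : ℕ) + 1) := by
  simp [auxPoly, map_sum]

theorem auxPoly_deriv {N : ℕ} (a : ℤ) (m : Fin N → ℤ) (x : ℝ) :
    aeval x (derivative (auxPoly a m)) =
      ∑ j : Fin N, (m j : ℝ) * (((j : ℕ) + 1 : ℝ) * x ^ (j : ℕ)) := by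
  simp [auxPoly, map_sum]

theorem aux_det {N : ℕ} (x : Fin N → ℝ) (u w : ℝ) (A : Matrix (Fin (N + 1)) (Fin (N + 1)) ℝ)
    (hA : A = Matrix.of (Fin.cons (Fin.cons u (fun _ => 0))
      (fun j => Fin.cons (x j) (fun k => if j = k then w else 0)))) :
    A.det = u * w ^ N := by
  rw [Matrix.det_of_isLowerTriangular]
  · rw [Fin.prod_univ_succ]; simp [hA]
  · intro i j hij
    have hij' : i < j := hij
    subst hA
    revert hij'
    refine Fin.cases ?_ (fun k => ?_) i <;> refine Fin.cases ?_ (fun l => ?_) j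
    · intro h; exact absurd h (lt_irrefl _)
    · intro _; simp
    · intro h; exact absurd h (Fin.not_lt_zero _)
    · intro h
      have : k < l := by simpa using h
      simp [this.ne]
/-- The covering argument applied to integer polynomials of degree at most `N` with even
constant coefficient. -/
theorem aux_core (N : ℕ) (hN : 1 ≤ N) (δ : ℝ) (hδ : 0 < δ) (s : ℝ) (hs1 : 1 ≤ s)
    (hs : ∑ j : Fin N, ((j : ℕ) + 1 : ℝ) * (1 / 2) ^ (j : ℕ) ≤ s)
    (Q : ℕ) (hQ : 0 < Q) (hδQ : 1 + δ * Q ≤ Q) (x₀ : ℝ) (hx : |x₀| ≤ 1 / 2)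
    (hyp : ∀ P : ℤ[X], P ≠ 0 → P.natDegree ≤ N →
          (∀ j, |P.coeff j| ≤ (Q : ℤ)) →
          |Polynomial.aeval x₀ P| < ((Q : ℝ) ^ N)⁻¹ →
          δ * (Q : ℝ) ≤ |Polynomial.aeval x₀ (derivative P)|)
    (y : ℝ) (z : Fin N → ℝ) :
    ∃ (a : ℤ) (m : Fin N → ℤ),
      |y - (2 * a + ∑ j : Fin N, (m j : ℝ) * x₀ ^ ((j : ℕ) + 1))| ≤
        2 * (s / δ) ^ N * ((Q : ℝ) ^ N)⁻¹ ∧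
      ∀ j, |z j - m j| ≤ 2 * (s / δ) ^ N * (δ * Q / s) := by
  have hQ' : (0 : ℝ) < Q := by exact_mod_cast hQ
  have hs0 : 0 < s := by linarith
  set q : ℝ := (Q : ℝ) ^ N with hq
  have hq0 : 0 < q := by positivity
  have hq1 : 1 ≤ q := one_le_pow₀ (by exact_mod_cast hQ)
  set w : ℝ := s / (δ * Q) with hw
  have hw0 : 0 < w := by positivity
  have hwi : w⁻¹ = δ * Q / s := by rw [hw, inv_div]
  obtain ⟨A, hA⟩ : ∃ A : Matrix (Fin (N + 1)) (Fin (N + 1)) ℝ,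
    A = Matrix.of (Fin.cons (Fin.cons (2 * q) (fun _ => 0))
      (fun j : Fin N => Fin.cons (x₀ ^ ((j : ℕ) + 1) * q) (fun k => if j = k then w else 0))) :=
    ⟨_, rfl⟩
  have hdet := aux_det (fun j : Fin N => x₀ ^ ((j : ℕ) + 1) * q) (2 * q) w A hA
  have hdet' : A.det = 2 * (s / δ) ^ N := by
    rw [hdet, hq, hw, mul_assoc, ← mul_pow]
    congr 2
    field_simp
  have hA00 : A 0 0 = 2 * q := by simp [hA]
  have hA0s : ∀ k : Fin N, A 0 k.succ = 0 := by intro k; simp [hA]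
  have hAs0 : ∀ j : Fin N, A j.succ 0 = x₀ ^ ((j : ℕ) + 1) * q := by intro j; simp [hA]
  have hAss : ∀ j k : Fin N, A j.succ k.succ = if j = k then w else 0 := by
    intro j k; simp [hA]
  clear hA
  have hv0 : ∀ m : Fin (N + 1) → ℤ, (∑ i, m i • A i) 0 =
      (2 * (m 0 : ℝ) + ∑ j : Fin N, (m j.succ : ℝ) * x₀ ^ ((j : ℕ) + 1)) * q := by
    intro m
    rw [Fin.sum_univ_succ]
    simp only [Pi.add_apply, Finset.sum_apply, Pi.smul_apply, hA00, hAs0]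
    simp only [zsmul_eq_mul]
    rw [add_mul, Finset.sum_mul]
    congr 1
    · ring
    · exact Finset.sum_congr rfl fun i _ => by ring
  have hvs : ∀ m : Fin (N + 1) → ℤ, ∀ k : Fin N, (∑ i, m i • A i) k.succ =
      (m k.succ : ℝ) * w := by
    intro m k
    rw [Fin.sum_univ_succ]
    simp only [Pi.add_apply, Finset.sum_apply, Pi.smul_apply, hA0s, hAss]
    simp
  obtain ⟨m, hm⟩ := aux_cover A (by rw [hdet']; positivity) (by
    intro m hm0
    by_contra hlt
    push Not at hlt
    rw [pi_norm_lt_iff one_pos] at hlt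
    have h0 := hlt 0
    rw [hv0, Real.norm_eq_abs, abs_mul, abs_of_pos hq0] at h0
    have hj : ∀ j : Fin N, |(m j.succ : ℝ)| < δ * Q / s := by
      intro j
      have := hlt j.succ
      rw [hvs, Real.norm_eq_abs, abs_mul, abs_of_pos hw0] at this
      rw [← hwi, ← one_div]
      rwa [lt_div_iff₀ hw0]
    have hδs : δ * Q / s ≤ δ * Q := div_le_self (by positivity) hs1
    have hval : |2 * (m 0 : ℝ) + ∑ j : Fin N, (m j.succ : ℝ) * x₀ ^ ((j : ℕ) + 1)| < q⁻¹ := by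
      rw [← one_div]
      rwa [lt_div_iff₀ hq0]
    have hsum1 : |∑ j : Fin N, (m j.succ : ℝ) * x₀ ^ ((j : ℕ) + 1)| ≤ δ * Q := by
      calc _ ≤ ∑ j : Fin N, |(m j.succ : ℝ) * x₀ ^ ((j : ℕ) + 1)| :=
            Finset.abs_sum_le_sum_abs _ _
        _ ≤ ∑ j : Fin N, (δ * Q / s) * (((j : ℕ) + 1 : ℝ) * (1 / 2) ^ (j : ℕ)) := by
            apply Finset.sum_le_sum
            intro j _
            rw [abs_mul, abs_pow, pow_succ]
            have h1 : |x₀| ^ (j : ℕ) ≤ (1 / 2) ^ (j : ℕ) := by gcongr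
            have h2 : |x₀| ^ (j : ℕ) * |x₀| ≤ ((j : ℕ) + 1 : ℝ) * (1 / 2) ^ (j : ℕ) := by
              rw [mul_comm]
              have : |x₀| ≤ ((j : ℕ) + 1 : ℝ) := by
                have : (0 : ℝ) ≤ (j : ℕ) := by positivity
                linarith
              gcongr
            exact mul_le_mul (hj j).le h2 (by positivity) (by positivity)
        _ = (δ * Q / s) * ∑ j : Fin N, (((j : ℕ) + 1 : ℝ) * (1 / 2) ^ (j : ℕ)) := by
            rw [Finset.mul_sum]
        _ ≤ (δ * Q / s) * s := by gcongr
        _ = δ * Q := by field_simp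
    have hder : |∑ j : Fin N, (m j.succ : ℝ) * (((j : ℕ) + 1 : ℝ) * x₀ ^ (j : ℕ))| < δ * Q := by
      calc _ ≤ ∑ j : Fin N, |(m j.succ : ℝ) * (((j : ℕ) + 1 : ℝ) * x₀ ^ (j : ℕ))| :=
            Finset.abs_sum_le_sum_abs _ _
        _ < ∑ j : Fin N, (δ * Q / s) * (((j : ℕ) + 1 : ℝ) * (1 / 2) ^ (j : ℕ)) := by
            apply Finset.sum_lt_sum_of_nonempty ⟨⟨0, hN⟩, Finset.mem_univ _⟩
            intro j _
            rw [abs_mul, abs_mul, abs_pow, abs_of_nonneg (by positivity : (0 : ℝ) ≤ (j : ℕ) + 1)]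
            calc |(m j.succ : ℝ)| * (((j : ℕ) + 1 : ℝ) * |x₀| ^ (j : ℕ))
                ≤ |(m j.succ : ℝ)| * (((j : ℕ) + 1 : ℝ) * (1 / 2) ^ (j : ℕ)) := by gcongr
              _ < _ := mul_lt_mul_of_pos_right (hj j) (by positivity)
        _ = (δ * Q / s) * ∑ j : Fin N, (((j : ℕ) + 1 : ℝ) * (1 / 2) ^ (j : ℕ)) := by
            rw [Finset.mul_sum]
        _ ≤ (δ * Q / s) * s := by gcongr
        _ = δ * Q := by field_simp
    have hcon := hyp (auxPoly (2 * m 0) fun j => m j.succ) (by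
        intro hz
        apply hm0
        funext i
        refine Fin.cases ?_ (fun j => ?_) i
        · have := auxPoly_coeff_zero (2 * m 0) fun j : Fin N => m j.succ
          rw [hz, coeff_zero] at this
          simp only [Pi.zero_apply]
          omega
        · have := auxPoly_coeff_succ (2 * m 0) (fun j : Fin N => m j.succ) j
          rw [hz, coeff_zero] at this
          exact this.symm)
      (auxPoly_natDegree _ _)
      (auxPoly_coeff_cases _ _ (fun c => |c| ≤ (Q : ℤ)) (by simp)
        (by
          have : |2 * (m 0 : ℝ)| ≤ Q := by
            have hqi : q⁻¹ ≤ 1 := inv_le_one_of_one_le₀ hq1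
            rw [abs_le] at hsum1 ⊢
            rw [abs_lt] at hval
            constructor <;> linarith [hval.1, hval.2, hsum1.1, hsum1.2]
          exact_mod_cast this)
        (by
          intro j
          have : |(m j.succ : ℝ)| ≤ Q := by linarith [hj j]
          exact_mod_cast this))
      (by rw [auxPoly_aeval]; push_cast; exact hval)
    rw [auxPoly_deriv] at hcon
    linarith) (Fin.cons (y * q) (fun j => z j * w))
  rw [hdet', pi_norm_le_iff_of_nonneg (by positivity)] at hm
  refine ⟨m 0, fun j => m j.succ, ?_, fun j => ?_⟩
  · have := hm 0
    rw [Pi.sub_apply, hv0, Fin.cons_zero, ← sub_mul, Real.norm_eq_abs, abs_mul,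
      abs_of_pos hq0] at this
    rw [← div_eq_mul_inv, le_div_iff₀ hq0]
    exact this
  · have := hm j.succ
    rw [Pi.sub_apply, hvs, Fin.cons_succ, ← sub_mul, Real.norm_eq_abs, abs_mul,
      abs_of_pos hw0] at this
    rw [← hwi, ← div_eq_mul_inv, le_div_iff₀ hw0]
    exact this

/-- Eisenstein at `2`. -/
theorem aux_eisenstein (N : ℕ) (a : ℤ) (m : Fin N → ℤ) (P : ℤ[X])
    (hP : P = X ^ (N + 1) + auxPoly (2 + 4 * a) (fun j => 2 * m j)) :
    P.Monic ∧ P.natDegree = N + 1 ∧ Irreducible (P.map (algebraMap ℤ ℚ)) := by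
  have hdeg : (auxPoly (2 + 4 * a) (fun j => 2 * m j)).degree < ((N + 1 : ℕ) : WithBot ℕ) := by
    refine lt_of_le_of_lt degree_le_natDegree ?_
    exact_mod_cast Nat.lt_succ_of_le (auxPoly_natDegree _ _)
  have hmon : P.Monic := by
    rw [hP]
    exact monic_X_pow_add hdeg
  have hnd : P.natDegree = N + 1 := by
    apply natDegree_eq_of_degree_eq_some
    rw [hP, degree_add_eq_left_of_degree_lt (by rwa [degree_X_pow]), degree_X_pow]
  refine ⟨hmon, hnd, ?_⟩
  rw [← hmon.irreducible_iff_irreducible_map_fraction_map]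
  have hprime : (Ideal.span {(2 : ℤ)}).IsPrime :=
    (Ideal.span_singleton_prime two_ne_zero).mpr Int.prime_two
  refine irreducible_of_eisenstein_criterion hprime ?_ ?_ ?_ ?_ hmon.isPrimitive
  · rw [hmon.leadingCoeff, Ideal.mem_span_singleton]
    norm_num
  · intro k hk
    rw [degree_eq_natDegree hmon.ne_zero, hnd] at hk
    have hk' : k < N + 1 := by exact_mod_cast hk
    rw [Ideal.mem_span_singleton, hP, coeff_add, coeff_X_pow, if_neg (by omega), zero_add]
    exact auxPoly_coeff_cases _ _ (fun c => 2 ∣ c) (dvd_zero _) (by omega)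
      (fun j => dvd_mul_right _ _) k
  · rw [degree_eq_natDegree hmon.ne_zero, hnd]
    exact_mod_cast Nat.succ_pos N
  · rw [Ideal.span_singleton_pow, Ideal.mem_span_singleton, hP, coeff_add, auxPoly_coeff_zero,
      coeff_X_pow, if_neg (by omega)]
    omega

set_option maxHeartbeats 2000000 in
/-- For `n ≥ 2`, `0 < δ₀ < 1` and sufficiently large integers `Q`: if `x₀ ∈ [-1/2, 1/2]`
is such that every nonzero `P ∈ ℤ[t]` of degree at most `n - 1` and height at most `Q`
with `|P(x₀)| < Q^{-n+1}` satisfies `|P'(x₀)| ≥ δ₀·Q`, then there exists a monic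
irreducible (over `ℚ`) integer polynomial `P` of degree `n` with
`n!·δ₀^{-(n-1)}·Q^{-n+1} ≤ |P(x₀)| ≤ 2·n!·(2n+1)·δ₀^{-(n-1)}·Q^{-n+1}`,
`|P'(x₀)| ≥ n!·Q`, `H(P) ≤ 6·(n+1)!·δ₀^{-(n-1)}·Q`, and a real root `α` with
`|x₀ - α| ≤ n·(2n+1)·δ₀^{-(n-1)}·Q⁻ⁿ`. -/
theorem exists_algebraic_integer_near_generic_point (n : ℕ) (hn : 2 ≤ n)
    (δ₀ : ℝ) (hδ₀ : 0 < δ₀) (hδ₀' : δ₀ < 1) :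
    ∃ Q₀ : ℕ, ∀ Q : ℕ, Q₀ < Q →
      ∀ x₀ : ℝ, x₀ ∈ Set.Icc (-(1/2) : ℝ) (1/2) →
        (∀ P : ℤ[X], P ≠ 0 → P.natDegree ≤ n - 1 →
          (∀ j, |P.coeff j| ≤ (Q : ℤ)) →
          |Polynomial.aeval x₀ P| < ((Q : ℝ) ^ (n - 1))⁻¹ →
          δ₀ * (Q : ℝ) ≤ |Polynomial.aeval x₀ (derivative P)|) →
        ∃ P : ℤ[X], P.Monic ∧ P.natDegree = n ∧
          Irreducible (P.map (algebraMap ℤ ℚ)) ∧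
          (Nat.factorial n : ℝ) * (δ₀ ^ (n - 1))⁻¹ * ((Q : ℝ) ^ (n - 1))⁻¹ ≤
            |Polynomial.aeval x₀ P| ∧
          |Polynomial.aeval x₀ P| ≤
            2 * (Nat.factorial n : ℝ) * (2 * n + 1) * (δ₀ ^ (n - 1))⁻¹ *
              ((Q : ℝ) ^ (n - 1))⁻¹ ∧
          (Nat.factorial n : ℝ) * (Q : ℝ) ≤ |Polynomial.aeval x₀ (derivative P)| ∧
          (∀ j, (|P.coeff j| : ℝ) ≤ 6 * (Nat.factorial (n + 1) : ℝ) * (δ₀ ^ (n - 1))⁻¹ * (Q : ℝ)) ∧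
          ∃ α : ℝ, Polynomial.aeval α P = 0 ∧
            |x₀ - α| ≤ (n : ℝ) * (2 * n + 1) * (δ₀ ^ (n - 1))⁻¹ * ((Q : ℝ) ^ n)⁻¹ := by
  obtain ⟨N, rfl⟩ : ∃ N, n = N + 1 := ⟨n - 1, by omega⟩
  have hN : 1 ≤ N := by omega
  simp only [Nat.add_sub_cancel]
  obtain ⟨s, hs1, hs, hs8⟩ := aux_s N hN
  have hs0 : 0 < s := by linarith
  set D : ℝ := (δ₀ ^ N)⁻¹ with hD
  have hD1 : 1 ≤ D := (one_le_inv₀ (by positivity)).mpr (pow_le_one₀ hδ₀.le hδ₀'.le)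
  have hNr : (1 : ℝ) ≤ N := by exact_mod_cast hN
  set K0 : ℝ := 6 * (N + 2) ^ 2 * (N + 1) ^ 3 * (2 * N + 3) * D ^ 2 with hK0
  refine ⟨⌈K0⌉₊ + ⌈1 / (1 - δ₀)⌉₊ + 2, fun Q hQ x₀ hx₀ hyp => ?_⟩
  have hQK : K0 ≤ Q := (Nat.le_ceil _).trans (by exact_mod_cast (by omega))
  have hQδ : 1 / (1 - δ₀) ≤ Q := (Nat.le_ceil _).trans (by exact_mod_cast (by omega))
  have hQ2 : (2 : ℝ) ≤ Q := by exact_mod_cast (by omega : 2 ≤ Q)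
  have hQ0 : (0 : ℝ) < Q := by linarith
  have hδQ : 1 + δ₀ * Q ≤ Q := by
    rw [div_le_iff₀ (by linarith)] at hQδ
    linarith
  have hx : |x₀| ≤ 1 / 2 := abs_le.mpr ⟨by linarith [hx₀.1], hx₀.2⟩
  set F : ℝ := (Nat.factorial (N + 1) : ℝ) with hF
  have hFN : (N : ℝ) + 1 ≤ F := by
    rw [hF]
    exact_mod_cast Nat.self_le_factorial (N + 1)
  have hF0 : 0 < F := by linarith
  have hF2 : (Nat.factorial (N + 1 + 1) : ℝ) = (N + 2) * F := by
    rw [Nat.factorial_succ]; push_cast; ring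
  obtain ⟨d, hd⟩ : ∃ d : ℝ, d = 2 * (s / δ₀) ^ N := ⟨_, rfl⟩
  have hd0 : 0 < d := by rw [hd]; positivity
  have hd4 : 4 * d ≤ F * (4 * N + 5) * D := by
    have : 4 * d = 8 * s ^ N * D := by rw [hd, div_pow, hD]; ring
    rw [this]
    gcongr
  set q : ℝ := (Q : ℝ) ^ N with hq
  have hq0 : 0 < q := by positivity
  have hq2 : 2 ≤ q := by
    calc (2 : ℝ) ≤ Q := hQ2
      _ = (Q : ℝ) ^ 1 := (pow_one _).symm
      _ ≤ q := pow_le_pow_right₀ (by linarith) hN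
  set c : ℝ := F * (4 * N + 7) / 2 * D * q⁻¹ with hc
  set τ : ℝ := F * Q + d * δ₀ * Q + (N + 1) / 2 with hτ
  have hτ0 : 0 < τ := by positivity
  obtain ⟨a, m, ha, hm⟩ := aux_core N hN δ₀ hδ₀ s hs1 hs Q (by omega) hδQ x₀ hx hyp
    ((c - x₀ ^ (N + 1) - 2) / 2) (fun j => if (j : ℕ) = 0 then τ else 0)
  rw [← hd] at ha hm
  obtain ⟨P, hP⟩ : ∃ P : ℤ[X], P = X ^ (N + 1) + auxPoly (2 + 4 * a) (fun j => 2 * m j) :=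
    ⟨_, rfl⟩
  obtain ⟨hmon, hnd, hirr⟩ := aux_eisenstein N a m P hP
  -- value at `x₀`
  have hval : aeval x₀ P = x₀ ^ (N + 1) + 2 + 2 *
      (2 * a + ∑ j : Fin N, (m j : ℝ) * x₀ ^ ((j : ℕ) + 1)) := by
    rw [hP, map_add, auxPoly_aeval, mul_add, Finset.mul_sum]
    simp only [map_pow, aeval_X, Int.cast_add, Int.cast_mul, Int.cast_ofNat, mul_assoc]
    ring
  have hclose : |c - aeval x₀ P| ≤ F * (4 * N + 5) / 2 * D * q⁻¹ := by
    have e : c - aeval x₀ P = 2 * ((c - x₀ ^ (N + 1) - 2) / 2 -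
        (2 * a + ∑ j : Fin N, (m j : ℝ) * x₀ ^ ((j : ℕ) + 1))) := by rw [hval]; ring
    rw [e, abs_mul, abs_two]
    calc _ ≤ 2 * (d * q⁻¹) := by gcongr
      _ = (4 * d) / 2 * q⁻¹ := by ring
      _ ≤ (F * (4 * N + 5) * D) / 2 * q⁻¹ := by gcongr
      _ = _ := by ring
  have hDq : 0 < F * D * q⁻¹ := by positivity
  have hlow : F * D * q⁻¹ ≤ aeval x₀ P := by
    have := (abs_le.mp hclose).2
    have e : c = F * (4 * N + 5) / 2 * D * q⁻¹ + F * D * q⁻¹ := by rw [hc]; ring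
    linarith
  have hupp : aeval x₀ P ≤ 2 * F * (2 * N + 3) * D * q⁻¹ := by
    have := (abs_le.mp hclose).1
    have e : c = 2 * F * (2 * N + 3) * D * q⁻¹ - F * (4 * N + 5) / 2 * D * q⁻¹ := by
      rw [hc]; ring
    linarith
  have hpos : 0 < aeval x₀ P := by linarith
  -- derivative at `x₀`
  have hderiv : aeval x₀ (derivative P) = (N + 1) * x₀ ^ N +
      2 * ∑ j : Fin N, (m j : ℝ) * (((j : ℕ) + 1 : ℝ) * x₀ ^ (j : ℕ)) := by
    rw [hP, derivative_add, map_add, auxPoly_deriv, Finset.mul_sum]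
    simp [mul_assoc]
  have hz : ∑ j : Fin N, (if (j : ℕ) = 0 then τ else 0) * (((j : ℕ) + 1 : ℝ) * x₀ ^ (j : ℕ))
      = τ := by
    rw [Finset.sum_eq_single (⟨0, hN⟩ : Fin N)]
    · simp
    · intro j _ hj
      rw [if_neg, zero_mul]
      intro h
      exact hj (Fin.ext h)
    · simp
  have hdiff : |τ - ∑ j : Fin N, (m j : ℝ) * (((j : ℕ) + 1 : ℝ) * x₀ ^ (j : ℕ))| ≤
      d * δ₀ * Q := by
    rw [← hz, ← Finset.sum_sub_distrib]
    calc _ ≤ ∑ j : Fin N, |(if (j : ℕ) = 0 then τ else 0) * (((j : ℕ) + 1 : ℝ) * x₀ ^ (j : ℕ))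
            - (m j : ℝ) * (((j : ℕ) + 1 : ℝ) * x₀ ^ (j : ℕ))| := Finset.abs_sum_le_sum_abs _ _
      _ ≤ ∑ j : Fin N, d * (δ₀ * Q / s) * (((j : ℕ) + 1 : ℝ) * (1 / 2) ^ (j : ℕ)) := by
          apply Finset.sum_le_sum
          intro j _
          rw [← sub_mul, abs_mul, abs_mul, abs_pow,
            abs_of_nonneg (by positivity : (0 : ℝ) ≤ (j : ℕ) + 1)]
          gcongr
          exact hm j
      _ = d * (δ₀ * Q / s) * ∑ j : Fin N, (((j : ℕ) + 1 : ℝ) * (1 / 2) ^ (j : ℕ)) := by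
          rw [Finset.mul_sum]
      _ ≤ d * (δ₀ * Q / s) * s := by gcongr
      _ = d * δ₀ * Q := by field_simp
  have hxN : ∀ k : ℕ, |x₀ ^ k| ≤ 1 := by
    intro k
    rw [abs_pow]
    exact pow_le_one₀ (abs_nonneg _) (by linarith)
  have hderlow : 2 * (F * Q) ≤ aeval x₀ (derivative P) := by
    have h1 := (abs_le.mp hdiff).2
    have h2 : -((N : ℝ) + 1) ≤ (N + 1) * x₀ ^ N := by
      have h3 := (abs_le.mp (hxN N)).1
      have h4 := mul_le_mul_of_nonneg_left h3 (by positivity : (0 : ℝ) ≤ (N : ℝ) + 1)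
      linarith
    rw [hderiv]
    linarith
  -- heights
  have hFDQ : F * Q ≤ F * D * Q := by
    have : F * 1 * Q ≤ F * D * Q := by gcongr
    linarith
  have hFQ : (N : ℝ) + 1 ≤ F * Q :=
    hFN.trans (le_mul_of_one_le_right hF0.le (by linarith))
  have hmj : ∀ j, |2 * (m j : ℝ)| ≤ F * D * Q * (4 * N + 8) := by
    intro j
    have h1 := hm j
    have h2 : |(if (j : ℕ) = 0 then τ else 0)| ≤ τ := by
      split_ifs
      · rw [abs_of_pos hτ0]
      · simpa using hτ0.le
    have h3 : |(m j : ℝ)| ≤ |(if (j : ℕ) = 0 then τ else 0)| +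
        |(if (j : ℕ) = 0 then τ else 0) - (m j : ℝ)| := by
      have := abs_sub_abs_le_abs_sub (m j : ℝ) (if (j : ℕ) = 0 then τ else 0)
      rw [abs_sub_comm] at this
      linarith
    have h4 : d * (δ₀ * Q / s) ≤ d * Q := by
      gcongr
      calc δ₀ * Q / s ≤ δ₀ * Q := div_le_self (by positivity) hs1
        _ ≤ 1 * Q := by gcongr
        _ = Q := one_mul _
    have h5 : d * δ₀ * Q ≤ d * Q := by
      have : d * δ₀ * Q ≤ d * 1 * Q := by gcongr
      linarith
    have h6 : 4 * d * Q ≤ F * (4 * N + 5) * D * Q := by gcongr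
    rw [abs_mul, abs_two]
    linarith
  have hB : F * D * Q * (4 * N + 8) ≤ 6 * ((N + 2) * F) * D * Q := by
    have : 0 ≤ F * D * Q * N := by positivity
    have : 0 ≤ F * D * Q := by positivity
    linarith
  have hsumx : |∑ j : Fin N, 2 * (m j : ℝ) * x₀ ^ ((j : ℕ) + 1)| ≤ F * D * Q * (4 * N + 8) := by
    have hgeo : ∀ M : ℕ, ∑ j : Fin M, (1 / 2 : ℝ) ^ ((j : ℕ) + 1) ≤ 1 := by
      intro M
      have : ∑ j : Fin M, (1 / 2 : ℝ) ^ ((j : ℕ) + 1) = 1 - (1 / 2) ^ M := by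
        rw [Fin.sum_univ_eq_sum_range (fun j => (1 / 2 : ℝ) ^ (j + 1))]
        induction M with
        | zero => norm_num
        | succ k ih => rw [Finset.sum_range_succ, ih]; ring
      rw [this]
      have : (0 : ℝ) ≤ (1 / 2) ^ M := by positivity
      linarith
    calc _ ≤ ∑ j : Fin N, |2 * (m j : ℝ) * x₀ ^ ((j : ℕ) + 1)| := Finset.abs_sum_le_sum_abs _ _
      _ ≤ ∑ j : Fin N, F * D * Q * (4 * N + 8) * (1 / 2) ^ ((j : ℕ) + 1) := by
          apply Finset.sum_le_sum
          intro j _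
          rw [abs_mul, abs_pow]
          gcongr
          exact hmj j
      _ = F * D * Q * (4 * N + 8) * ∑ j : Fin N, (1 / 2) ^ ((j : ℕ) + 1) := by
          rw [Finset.mul_sum]
      _ ≤ F * D * Q * (4 * N + 8) * 1 := by gcongr; exact hgeo N
      _ = _ := mul_one _
  have hFD1 : 1 ≤ F * D := one_le_mul_of_one_le_of_one_le (by linarith) hD1
  have ha0 : |(2 + 4 * a : ℝ)| ≤ 6 * ((N + 2) * F) * D * Q := by
    have e : (2 + 4 * a : ℝ) = aeval x₀ P - x₀ ^ (N + 1) -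
        ∑ j : Fin N, 2 * (m j : ℝ) * x₀ ^ ((j : ℕ) + 1) := by
      rw [hval, mul_add, Finset.mul_sum]
      simp only [mul_assoc]
      ring
    have h1 : 2 * F * (2 * N + 3) * D * q⁻¹ ≤ F * D * (2 * N + 3) := by
      have : q⁻¹ ≤ 2⁻¹ := inv_anti₀ two_pos hq2
      calc _ ≤ 2 * F * (2 * N + 3) * D * 2⁻¹ := by gcongr
        _ = _ := by ring
    have h2 : F * D * (2 * N + 4) ≤ F * D * (2 * N + 4) * Q := by
      exact le_mul_of_one_le_right (by positivity) (by linarith)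
    have h3 := abs_le.mp (hxN (N + 1))
    have h4 := abs_le.mp hsumx
    rw [abs_le, e]
    constructor <;> linarith [h3.1, h3.2, h4.1, h4.2]
  have hcoeff : ∀ j, |(P.coeff j : ℝ)| ≤ 6 * ((N + 2) * F) * D * Q := by
    intro j
    by_cases hj : j = N + 1
    · have : P.coeff j = 1 := by rw [hj, ← hnd]; exact hmon
      rw [this, Int.cast_one, abs_one]
      have : 0 ≤ F * D * Q * N := by positivity
      have : 1 ≤ F * D * Q := one_le_mul_of_one_le_of_one_le hFD1 (by linarith)
      linarith
    · have : P.coeff j = (auxPoly (2 + 4 * a) (fun j => 2 * m j)).coeff j := by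
        rw [hP, coeff_add, coeff_X_pow, if_neg hj, zero_add]
      rw [this]
      refine auxPoly_coeff_cases _ _ (fun c : ℤ => |(c : ℝ)| ≤ 6 * ((N + 2) * F) * D * Q)
        ?_ ?_ ?_ j
      · simp only [Int.cast_zero, abs_zero]; positivity
      · push_cast; exact ha0
      · intro j
        push_cast
        exact (hmj j).trans hB
  -- the root
  have hQn : (Q : ℝ) ^ (N + 1) = q * Q := pow_succ _ _
  have hqQ : K0 ≤ q * Q :=
    hQK.trans (le_mul_of_one_le_left hQ0.le (by linarith))
  set η : ℝ := ((N : ℝ) + 1) * (2 * N + 3) * D * (q * Q)⁻¹ with hη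
  have hroot := aux_root (N + 1) (P.map (Int.castRingHom ℝ))
    ((natDegree_map_le).trans hnd.le) (6 * ((N + 2) * F) * D * Q)
    (by intro j; rw [coeff_map]; exact hcoeff j) x₀ η (F * Q) hx (by positivity)
    (by
      rw [hη, ← div_eq_mul_inv, div_le_iff₀ (by positivity)]
      have h1 : ((N : ℝ) + 1) * (2 * N + 3) * D * 2 ≤ K0 := by
        have e : K0 = ((N : ℝ) + 1) * (2 * N + 3) * D * (6 * (N + 2) ^ 2 * (N + 1) ^ 2 * D) := by
          rw [hK0]; ring
        rw [e]
        have : (2 : ℝ) ≤ 6 * (N + 2) ^ 2 * (N + 1) ^ 2 * D := by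
          have h3 : (1 : ℝ) ≤ (N + 2) ^ 2 := one_le_pow₀ (by linarith)
          have h4 : (1 : ℝ) ≤ (N + 1) ^ 2 := one_le_pow₀ (by linarith)
          calc (2 : ℝ) ≤ 6 * 1 * 1 * 1 := by norm_num
            _ ≤ _ := by gcongr
        gcongr
      linarith)
    (by
      rw [derivative_map, eval_map, ← algebraMap_int_eq, ← aeval_def]
      exact hderlow)
    (by
      have e : ((N + 1 : ℕ) + 1 : ℝ) * ((N + 1 : ℕ) : ℝ) ^ 2 * (6 * ((N + 2) * F) * D * Q) * η
          = F * Q * (K0 * (q * Q)⁻¹) := by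
        rw [hη, hK0]; push_cast; ring
      rw [e]
      have : K0 * (q * Q)⁻¹ ≤ 1 := by
        rw [← div_eq_mul_inv]
        exact div_le_one_of_le₀ hqQ (by positivity)
      exact mul_le_of_le_one_right (by positivity) this)
    (by
      rw [eval_map, ← algebraMap_int_eq, ← aeval_def]
      exact hpos.le)
    (by
      rw [eval_map, ← algebraMap_int_eq, ← aeval_def]
      refine hupp.trans ?_
      have e : F * Q * η = F * ((N + 1) * (2 * N + 3)) * D * q⁻¹ := by
        rw [hη]; field_simp
      rw [e]
      have : 2 * F * (2 * N + 3) ≤ F * ((N + 1) * (2 * N + 3)) := by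
        have h6 : 0 ≤ F * (2 * N + 3) * (N - 1) := by
          have : 0 ≤ (N : ℝ) - 1 := by linarith
          positivity
        linarith
      gcongr)
  obtain ⟨α, hα0, hα⟩ := hroot
  refine ⟨P, hmon, hnd, hirr, ?_, ?_, ?_, ?_, α, ?_, ?_⟩
  · rw [abs_of_pos hpos]; exact hlow
  · rw [abs_of_pos hpos]
    refine hupp.trans (le_of_eq ?_)
    push_cast; ring
  · refine le_trans ?_ (le_abs_self _)
    have : 0 ≤ F * Q := by positivity
    linarith
  · intro j
    rw [hF2]
    exact hcoeff j
  · rw [eval_map, ← algebraMap_int_eq, ← aeval_def] at hα0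
    exact hα0
  · refine hα.trans (le_of_eq ?_)
    rw [hη, hQn]; push_cast; ring
end

section
/- Let n ≥ 4, let ε > 0, let u₁, u₂ > 0 satisfy u₁ + u₂ = n - 2, let 0 < δ₀ < 1, and let Q > Q₀(n, δ₀, ε) be a sufficiently large integer. Suppose (x₀, y₀) ∈ [-1/2, 1/2]² satisfies |x₀ - y₀| > ε and is such that every nonzero polynomial P ∈ ℤ[t] with deg P ≤ n - 1 and H(P) ≤ Q satisfying |P(x₀)| < Q^{-u₁} and |P(y₀)| < Q^{-u₂} also satisfies |P'(x₀)| ≥ δ₀·Q and |P'(y₀)| ≥ δ₀·Q. Then there exists a monic polynomial P ∈ ℤ[t] of degree n, irreducible over ℚ, with H(P) < 2·10⁴·(n+4)!·δ₀^{-(n-1)}·Q, having real roots α and β such that |x₀ - α| < n·(2n+1)·δ₀^{-(n-1)}·Q^{-u₁-1} and |y₀ - β| < n·(2n+1)·δ₀^{-(n-1)}·Q^{-u₂-1}. -/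
open Polynomial

lemma mink_lin {ι : Type} [Fintype ι] [DecidableEq ι] (M : Matrix ι ι ℝ) (h0 : M.det ≠ 0)
    (h1 : |M.det| < 1) :
    ∃ z : ι → ℤ, z ≠ 0 ∧ ∀ i, |(M.mulVec (fun j => (z j : ℝ))) i| < 1 := by
  classical
  have hdet : LinearMap.det (Matrix.toLin' M) ≠ 0 := by rwa [LinearMap.det_toLin']
  have fund := ZSpan.isAddFundamentalDomain' (Pi.basisFun ℝ ι) MeasureTheory.volume
  have : Countable (Submodule.span ℤ (Set.range (Pi.basisFun ℝ ι))).toAddSubgroup :=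
    inferInstanceAs (Countable (Submodule.span ℤ (Set.range (Pi.basisFun ℝ ι))))
  have key := MeasureTheory.exists_ne_zero_mem_lattice_of_measure_mul_two_pow_lt_measure
    (μ := MeasureTheory.volume)
    (s := (Matrix.toLin' M) ⁻¹' (Metric.ball (0 : ι → ℝ) 1)) fund ?_ ?_ ?_
  · obtain ⟨x, hx0, hx⟩ := key
    have hmem := x.2
    rw [Submodule.mem_toAddSubgroup, Module.Basis.mem_span_iff_repr_mem] at hmem
    choose z hz using hmem
    have hxz : (x : ι → ℝ) = fun j => (z j : ℝ) := by
      funext j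
      have := hz j
      simpa using this.symm
    refine ⟨z, ?_, ?_⟩
    · rintro rfl
      apply hx0
      ext j
      rw [hxz]; simp
    · intro i
      rw [Set.mem_preimage, mem_ball_zero_iff, pi_norm_lt_iff one_pos, Matrix.toLin'_apply, hxz] at hx
      exact hx i
  · intro x hx
    simpa [Matrix.mulVec_neg] using hx
  · exact (convex_ball _ _).linear_preimage _
  · rw [MeasureTheory.Measure.addHaar_preimage_linearMap _ hdet, Real.volume_pi_ball _ one_pos,
      ZSpan.fundamentalDomain_pi_basisFun, MeasureTheory.volume_pi, MeasureTheory.Measure.pi_pi]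
    simp only [Real.volume_Ico, sub_zero, ENNReal.ofReal_one, Finset.prod_const_one, one_mul,
      Module.finrank_fintype_fun_eq_card, mul_one, LinearMap.det_toLin']
    rw [ENNReal.ofReal_pow (by norm_num), ENNReal.ofReal_ofNat]
    have : (1 : ENNReal) < ENNReal.ofReal |(M.det)⁻¹| := by
      rw [← ENNReal.ofReal_one, ENNReal.ofReal_lt_ofReal_iff_of_nonneg zero_le_one, abs_inv]
      exact (one_lt_inv₀ (abs_pos.2 h0)).2 h1
    calc (2 : ENNReal) ^ Fintype.card ι = 1 * 2 ^ Fintype.card ι := (one_mul _).symm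
      _ < _ := by
        rw [ENNReal.mul_lt_mul_iff_left (by simp) (by simp)]
        exact this

lemma span_lemma {ι : Type} [Fintype ι] [DecidableEq ι] [Nonempty ι] (A : Matrix ι ι ℝ)
    (h0 : A.det ≠ 0) (l L : ℝ) (hl : 0 < l) (hL : 0 < L)
    (hmin : ∀ z : ι → ℤ, z ≠ 0 → ¬ ∀ i, |(A.mulVec (fun j => (z j : ℝ))) i| < l)
    (hdet : |A.det| < l ^ (Fintype.card ι - 1) * L) :
    Submodule.span ℝ {v : ι → ℝ | ∃ z : ι → ℤ, v = (fun j => (z j : ℝ)) ∧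
      ∀ i, |(A.mulVec (fun j => (z j : ℝ))) i| < L} = ⊤ := by
  have hcard : Fintype.card ι = (Fintype.card ι - 1) + 1 :=
    (Nat.succ_pred_eq_of_pos Fintype.card_pos).symm
  have hlL : l ≤ L := by
    by_contra hcon
    push Not at hcon
    obtain ⟨z, hz, hz'⟩ := mink_lin (l⁻¹ • A) (by
      rw [Matrix.det_smul]; positivity) (by
      rw [Matrix.det_smul, abs_mul, abs_of_pos (by positivity), inv_pow,
        inv_mul_lt_iff₀ (by positivity), mul_one, hcard, pow_succ]
      refine hdet.trans ?_
      gcongr)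
    refine hmin z hz fun i => ?_
    have := hz' i
    rw [Matrix.smul_mulVec, Pi.smul_apply, smul_eq_mul, abs_mul, abs_of_pos (by positivity),
      inv_mul_lt_iff₀ hl, mul_one] at this
    exact this
  by_contra hspan
  obtain ⟨f, hf0, hf⟩ := Submodule.exists_le_ker_of_lt_top _ (lt_top_iff_ne_top.2 hspan)
  have hAu : IsUnit A.det := isUnit_iff_ne_zero.2 h0
  let f' : ι → ℝ := fun i => f (fun j => if i = j then 1 else 0)
  have hfe : ∀ v, f v = f' ⬝ᵥ v := by
    intro v
    rw [LinearMap.pi_apply_eq_sum_univ f v]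
    simp only [dotProduct, f', smul_eq_mul, mul_comm]
  let a : ι → ℝ := Matrix.vecMul f' A⁻¹
  have hfa : ∀ v, f v = a ⬝ᵥ (A.mulVec v) := by
    intro v
    rw [hfe, ← Matrix.dotProduct_mulVec, Matrix.mulVec_mulVec, Matrix.nonsing_inv_mul _ hAu,
      Matrix.one_mulVec]
  let S : ℝ := ∑ i, |a i|
  have ha0 : a ≠ 0 := by
    intro h
    apply hf0
    refine LinearMap.ext fun v => ?_
    rw [hfa, h, zero_dotProduct, LinearMap.zero_apply]
  have hS : 0 < S := by
    obtain ⟨i, hi⟩ := Function.ne_iff.1 ha0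
    exact Finset.sum_pos' (fun _ _ => abs_nonneg _) ⟨i, Finset.mem_univ _, abs_pos.2 hi⟩
  let w : ι → ℝ := fun i => SignType.sign (a i)
  have hw : ∀ i, |w i| ≤ 1 := by
    intro i
    simp only [w]
    rcases lt_trichotomy (a i) 0 with h | h | h <;> simp [h]
  have haw : a ⬝ᵥ w = S := by
    simp only [dotProduct, S, w]
    exact Finset.sum_congr rfl fun i _ => by rw [mul_comm]; exact sign_mul_self _
  let c : ℝ := l / L
  have hc : 0 < c := by positivity
  have hc1 : c ≤ 1 := (div_le_one hL).2 hlL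
  let U : Matrix ι ι ℝ := c⁻¹ • (1 + Matrix.replicateCol Unit (fun i => -((1 - c) / S) * w i) *
    Matrix.replicateRow Unit a)
  have hUdet : U.det = (c ^ (Fintype.card ι - 1))⁻¹ := by
    simp only [U]
    rw [Matrix.det_smul, Matrix.det_one_add_replicateCol_mul_replicateRow]
    have : (a ⬝ᵥ fun i => -((1 - c) / S) * w i) = -(1 - c) := by
      have : (fun i => -((1 - c) / S) * w i) = (-((1 - c) / S)) • w := rfl
      rw [this, dotProduct_smul, haw, smul_eq_mul]
      field_simp
    rw [this]
    nth_rewrite 1 [hcard]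
    rw [pow_succ, inv_pow]
    field_simp
    ring
  have hUv : ∀ v i, (U.mulVec v) i = c⁻¹ * (v i - (1 - c) / S * (a ⬝ᵥ v) * w i) := by
    intro v i
    simp only [U]
    rw [Matrix.smul_mulVec, Matrix.add_mulVec, Matrix.one_mulVec, ← Matrix.vecMulVec_eq,
      Matrix.vecMulVec_mulVec]
    simp
    left
    ring
  have hdetM : (L⁻¹ • (U * A)).det = (l ^ (Fintype.card ι - 1) * L)⁻¹ * A.det := by
    rw [Matrix.det_smul, Matrix.det_mul, hUdet]
    nth_rewrite 1 [hcard]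
    simp only [c]
    rw [pow_succ, div_pow, inv_pow]
    field_simp
  obtain ⟨z, hz, hz'⟩ := mink_lin (L⁻¹ • (U * A)) (by
      rw [hdetM]; positivity) (by
      rw [hdetM, abs_mul, abs_of_pos (by positivity), inv_mul_lt_iff₀ (by positivity), mul_one]
      exact hdet)
  set v := A.mulVec (fun j => (z j : ℝ)) with hv
  set s := a ⬝ᵥ v with hs
  let y : ι → ℝ := fun i => l⁻¹ * (v i - (1 - c) / S * s * w i)
  have hy : ∀ i, |y i| < 1 := by
    intro i
    have := hz' i
    rw [Matrix.smul_mulVec, Pi.smul_apply, smul_eq_mul, ← Matrix.mulVec_mulVec, hUv] at this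
    convert this using 2
    simp only [y, c]
    rw [← hv, ← hs]
    field_simp
  have hvy : ∀ i, v i = l * y i + (1 - c) / S * s * w i := by
    intro i; simp only [y]; field_simp; ring
  have hay : a ⬝ᵥ y = s / L := by
    have : y = l⁻¹ • (v - ((1 - c) / S * s) • w) := by
      funext i; simp [y]
    rw [this, dotProduct_smul, dotProduct_sub, dotProduct_smul, haw, ← hs, smul_eq_mul, smul_eq_mul]
    simp only [c]
    field_simp
    ring
  have hsle : |s| ≤ L * S := by
    have : |a ⬝ᵥ y| ≤ S := by
      refine (Finset.abs_sum_le_sum_abs _ _).trans (Finset.sum_le_sum fun i _ => ?_)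
      rw [abs_mul]
      exact mul_le_of_le_one_right (abs_nonneg _) (hy i).le
    rw [hay, abs_div, abs_of_pos hL, div_le_iff₀ hL] at this
    linarith
  have hvL : ∀ i, |v i| < L := by
    intro i
    rw [hvy i]
    have h1 : |l * y i| < l := by
      rw [abs_mul, abs_of_pos hl]
      exact mul_lt_of_lt_one_right hl (hy i)
    have h2 : |(1 - c) / S * s * w i| ≤ L - l := by
      rw [abs_mul, abs_mul, abs_of_nonneg (div_nonneg (by linarith) hS.le)]
      have h3 : (1 - c) / S * |s| ≤ L - l := by
        calc (1 - c) / S * |s| ≤ (1 - c) / S * (L * S) := by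
              apply mul_le_mul_of_nonneg_left hsle (div_nonneg (by linarith) hS.le)
          _ = L - l := by simp only [c]; field_simp
      exact (mul_le_of_le_one_right (by have := sub_nonneg.2 hc1; positivity) (hw i)).trans h3
    exact (abs_add_le _ _).trans_lt (by linarith)
  have hs0 : s = 0 := by
    have := hf (Submodule.subset_span ⟨z, rfl, hvL⟩)
    rw [LinearMap.mem_ker, hfa] at this
    exact this
  refine hmin z hz fun i => ?_
  rw [← hv, hvy i, hs0]
  simp only [mul_zero, zero_mul, add_zero]
  rw [abs_mul, abs_of_pos hl]
  exact mul_lt_of_lt_one_right hl (hy i)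

lemma cover_lemma {ι : Type} [Fintype ι] [DecidableEq ι] (Z : (ι → ℤ) → Prop)
    (hspan : Submodule.span ℝ {v : ι → ℝ | ∃ z : ι → ℤ, v = (fun j => (z j : ℝ)) ∧ Z z} = ⊤)
    (q : ι → ℝ) :
    ∃ z : ι → ℤ, ∀ (h : (ι → ℝ) →ₗ[ℝ] ℝ) (B : ℝ),
      (∀ v : ι → ℤ, Z v → |h (fun j => (v j : ℝ))| ≤ B) →
      |h q - h (fun j => (z j : ℝ))| ≤ Fintype.card ι * B / 2 := by
  classical
  obtain ⟨b, hb, hbs, hbi⟩ := exists_linearIndependent ℝ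
    {v : ι → ℝ | ∃ z : ι → ℤ, v = (fun j => (z j : ℝ)) ∧ Z z}
  rw [hspan] at hbs
  let bas := Module.Basis.mk hbi (by rw [Subtype.range_coe, hbs])
  have : Fintype b := FiniteDimensional.fintypeBasisIndex bas
  have hcard : Fintype.card b = Fintype.card ι := by
    rw [← Module.finrank_eq_card_basis bas, Module.finrank_fintype_fun_eq_card]
  choose g hg hgZ using fun x : b => hb x.2
  obtain ⟨r, hq⟩ : ∃ r : b → ℝ, q = ∑ x : b, r x • (x : ι → ℝ) := by
    refine ⟨fun x => bas.repr q x, ?_⟩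
    conv_lhs => rw [← bas.sum_repr q]
    simp [bas]
  refine ⟨∑ x : b, round (r x) • g x, fun h B hB => ?_⟩
  have hz : (fun j => (((∑ x : b, round (r x) • g x) j : ℤ) : ℝ)) =
      ∑ x : b, (round (r x) : ℝ) • (x : ι → ℝ) := by
    funext j
    simp only [Finset.sum_apply, Pi.smul_apply, smul_eq_mul, Int.cast_sum, Int.cast_mul]
    refine Finset.sum_congr rfl fun x _ => ?_
    conv_rhs => rw [hg x]
  rw [hz]
  conv_lhs => rw [hq]
  rw [map_sum, map_sum, ← Finset.sum_sub_distrib]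
  refine (Finset.abs_sum_le_sum_abs _ _).trans ?_
  calc _ ≤ ∑ x : b, B / 2 := by
        refine Finset.sum_le_sum fun x _ => ?_
        rw [← map_sub, ← sub_smul, map_smul, smul_eq_mul, abs_mul]
        have h1 : |r x - round (r x)| ≤ 1 / 2 := abs_sub_round _
        have h2 : |h (x : ι → ℝ)| ≤ B := by rw [hg x]; exact hB _ (hgZ x)
        have := mul_le_mul h1 h2 (abs_nonneg _) (by norm_num)
        linarith
    _ = _ := by
      rw [Finset.sum_const, Finset.card_univ, hcard, nsmul_eq_mul]; ring

def ex {m : ℕ} : Fin 2 ⊕ Fin m → ℕ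
  | Sum.inl i => i
  | Sum.inr j => j + 2

lemma ex_inj {m : ℕ} : Function.Injective (ex (m := m)) := by
  rintro (i | i) (j | j) h <;> simp only [ex] at h
  · rw [Fin.ext h]
  · omega
  · omega
  · rw [Fin.ext (by omega : (i : ℕ) = j)]

lemma ex_lt {m : ℕ} (i : Fin 2 ⊕ Fin m) : ex i < m + 2 := by
  rcases i with i | i <;> simp only [ex] <;> omega

lemma ex_surj {m j : ℕ} (h : j < m + 2) : ∃ i : Fin 2 ⊕ Fin m, ex i = j := by
  by_cases hj : j < 2
  · exact ⟨Sum.inl ⟨j, hj⟩, rfl⟩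
  · refine ⟨Sum.inr ⟨j - 2, by omega⟩, ?_⟩
    simp only [ex]; omega

noncomputable def pol {m : ℕ} {R : Type} [CommRing R] (z : Fin 2 ⊕ Fin m → R) : R[X] :=
  ∑ i, C (z i) * X ^ (ex i)

lemma pol_coeff_ex {m : ℕ} {R : Type} [CommRing R] (z : Fin 2 ⊕ Fin m → R)
    (i : Fin 2 ⊕ Fin m) : (pol z).coeff (ex i) = z i := by
  classical
  simp only [pol, finsetSum_coeff, coeff_C_mul_X_pow, ex_inj.eq_iff]
  simp

lemma pol_coeff_ge {m : ℕ} {R : Type} [CommRing R] (z : Fin 2 ⊕ Fin m → R) (j : ℕ)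
    (h : m + 2 ≤ j) : (pol z).coeff j = 0 := by
  simp only [pol, finsetSum_coeff, coeff_C_mul_X_pow]
  refine Finset.sum_eq_zero fun i _ => if_neg ?_
  have := ex_lt i
  omega

lemma pol_natDegree {m : ℕ} {R : Type} [CommRing R] (z : Fin 2 ⊕ Fin m → R) :
    (pol z).natDegree ≤ m + 1 :=
  natDegree_le_iff_coeff_eq_zero.2 fun j hj => pol_coeff_ge z j (by omega)

lemma pol_of {m : ℕ} (R : ℝ[X]) (h : ∀ j, m + 2 ≤ j → R.coeff j = 0) :
    R = pol (m := m) (fun i => R.coeff (ex i)) := by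
  ext j
  by_cases hj : j < m + 2
  · obtain ⟨i, rfl⟩ := ex_surj hj
    rw [pol_coeff_ex]
  · rw [pol_coeff_ge _ _ (by omega), h j (by omega)]

/-- evaluation as a linear functional of the coefficient vector -/
noncomputable def evf (m : ℕ) (t : ℝ) : (Fin 2 ⊕ Fin m → ℝ) →ₗ[ℝ] ℝ :=
  ∑ i, (t ^ ex i) • LinearMap.proj i

noncomputable def dvf (m : ℕ) (t : ℝ) : (Fin 2 ⊕ Fin m → ℝ) →ₗ[ℝ] ℝ :=
  ∑ i, ((ex i : ℝ) * t ^ (ex i - 1)) • LinearMap.proj i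

lemma evf_apply (m : ℕ) (t : ℝ) (a : Fin 2 ⊕ Fin m → ℝ) : evf m t a = ∑ i, a i * t ^ ex i := by
  simp [evf, mul_comm]

lemma dvf_apply (m : ℕ) (t : ℝ) (a : Fin 2 ⊕ Fin m → ℝ) :
    dvf m t a = ∑ i, a i * ((ex i : ℝ) * t ^ (ex i - 1)) := by
  simp [dvf, mul_comm]

lemma eval_pol (m : ℕ) (t : ℝ) (a : Fin 2 ⊕ Fin m → ℝ) : (pol a).eval t = evf m t a := by
  simp [pol, evf_apply, eval_finsetSum]

lemma eval_der_pol (m : ℕ) (t : ℝ) (a : Fin 2 ⊕ Fin m → ℝ) :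
    (derivative (pol a)).eval t = dvf m t a := by
  simp [pol, dvf_apply, eval_finsetSum, derivative_X_pow]

lemma aeval_pol (m : ℕ) (t : ℝ) (z : Fin 2 ⊕ Fin m → ℤ) :
    aeval t (pol z) = evf m t (fun i => (z i : ℝ)) := by
  simp [pol, evf_apply]

lemma aeval_der_pol (m : ℕ) (t : ℝ) (z : Fin 2 ⊕ Fin m → ℤ) :
    aeval t (derivative (pol z)) = dvf m t (fun i => (z i : ℝ)) := by
  simp [pol, dvf_apply, derivative_X_pow]

lemma sum_bound (m : ℕ) : ∑ j : Fin m, ((j : ℕ) + 2 : ℝ) * (1 / 2 : ℝ) ^ ((j : ℕ) + 1) ≤ 3 := by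
  rw [Fin.sum_univ_eq_sum_range (fun j : ℕ => ((j : ℝ) + 2) * (1 / 2 : ℝ) ^ (j + 1))]
  have : ∀ m : ℕ, ∑ j ∈ Finset.range m, ((j : ℝ) + 2) * (1 / 2 : ℝ) ^ (j + 1)
      = 3 - (m + 3) * (1 / 2 : ℝ) ^ m := by
    intro m
    induction m with
    | zero => norm_num
    | succ k ih => rw [Finset.sum_range_succ, ih]; push_cast; ring
  rw [this]
  have : (0 : ℝ) ≤ (m + 3) * (1 / 2 : ℝ) ^ m := by positivity
  linarith

lemma small_bound (m : ℕ) (a : Fin 2 ⊕ Fin m → ℝ) (x y ε Q L : ℝ) (hx : |x| ≤ 1 / 2)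
    (hy : |y| ≤ 1 / 2) (hε : 0 < ε) (hd : ε < |x - y|) (hQ : 2 ≤ Q * ε) (hQ1 : 1 ≤ Q) (hL : 0 < L)
    (h1 : |evf m x a| ≤ L) (h2 : |evf m y a| ≤ L) (h3 : ∀ j, |a (Sum.inr j)| ≤ L * Q) :
    (∀ i, |a i| ≤ 4 * L * Q) ∧ |dvf m x a| ≤ 7 * L * Q := by
  have hev : ∀ t, evf m t a = a (Sum.inl 0) + a (Sum.inl 1) * t
      + ∑ j : Fin m, a (Sum.inr j) * t ^ ((j : ℕ) + 2) := by
    intro t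
    rw [evf_apply, Fintype.sum_sum_type, Fin.sum_univ_two]
    simp [ex]
  have hdv : dvf m x a = a (Sum.inl 1)
      + ∑ j : Fin m, a (Sum.inr j) * (((j : ℕ) + 2 : ℝ) * x ^ ((j : ℕ) + 1)) := by
    rw [dvf_apply, Fintype.sum_sum_type, Fin.sum_univ_two]
    simp [ex]
  set d := |x - y| with hdd
  have hd0 : 0 < d := hε.trans hd
  have hLQ : 0 < L * Q := by positivity
  have gen : ∀ (f : Fin m → ℝ) (K : ℝ), 0 ≤ K →
      (∀ j, |f j| ≤ K * (((j : ℕ) + 2 : ℝ) * (1 / 2 : ℝ) ^ ((j : ℕ) + 1))) →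
      |∑ j : Fin m, a (Sum.inr j) * f j| ≤ 3 * K * (L * Q) := by
    intro f K hK hf
    calc _ ≤ ∑ j : Fin m, |a (Sum.inr j) * f j| := Finset.abs_sum_le_sum_abs _ _
      _ ≤ ∑ j : Fin m, (L * Q * K) * (((j : ℕ) + 2 : ℝ) * (1 / 2 : ℝ) ^ ((j : ℕ) + 1)) := by
        refine Finset.sum_le_sum fun j _ => ?_
        rw [abs_mul, mul_assoc]
        exact mul_le_mul (h3 j) (hf j) (abs_nonneg _) hLQ.le
      _ = (L * Q * K) * _ := by rw [← Finset.mul_sum]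
      _ ≤ (L * Q * K) * 3 := mul_le_mul_of_nonneg_left (sum_bound m) (by positivity)
      _ = _ := by ring
  have hD := gen (fun j => x ^ ((j : ℕ) + 2) - y ^ ((j : ℕ) + 2)) d hd0.le (fun j => by
    refine (abs_pow_sub_pow_le _ _ _).trans ?_
    rw [mul_assoc, ← hdd]
    refine mul_le_mul_of_nonneg_left ?_ hd0.le
    push_cast
    have : max |x| |y| ^ ((j : ℕ) + 2 - 1) ≤ (1 / 2 : ℝ) ^ ((j : ℕ) + 1) :=
      pow_le_pow_left₀ (le_max_of_le_left (abs_nonneg _)) (max_le hx hy) _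
    exact mul_le_mul_of_nonneg_left this (by positivity))
  have hE := gen (fun j => ((j : ℕ) + 2 : ℝ) * x ^ ((j : ℕ) + 1)) 1 zero_le_one (fun j => by
    rw [one_mul, abs_mul, abs_of_nonneg (by positivity), abs_pow]
    exact mul_le_mul_of_nonneg_left (pow_le_pow_left₀ (abs_nonneg _) hx _) (by positivity))
  have hG := gen (fun j => x ^ ((j : ℕ) + 2)) (1 / 4) (by norm_num) (fun j => by
    rw [abs_pow]
    refine (pow_le_pow_left₀ (abs_nonneg _) hx _).trans ?_
    rw [pow_succ (1 / 2 : ℝ) ((j : ℕ) + 1)]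
    have : (0 : ℝ) < (1 / 2) ^ ((j : ℕ) + 1) := by positivity
    have : (0 : ℝ) ≤ (j : ℕ) := by positivity
    nlinarith)
  have e1 := hev x
  have e2 := hev y
  simp only [mul_sub, Finset.sum_sub_distrib] at hD
  set sx := ∑ j : Fin m, a (Sum.inr j) * x ^ ((j : ℕ) + 2)
  set sy := ∑ j : Fin m, a (Sum.inr j) * y ^ ((j : ℕ) + 2)
  set se := ∑ j : Fin m, a (Sum.inr j) * (((j : ℕ) + 2 : ℝ) * x ^ ((j : ℕ) + 1))
  have hQd : 2 * L ≤ L * Q * d := by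
    have : Q * ε ≤ Q * d := by gcongr
    nlinarith
  have k1 : a (Sum.inl 1) * (x - y) = evf m x a - evf m y a - (sx - sy) := by
    rw [e1, e2]; ring
  have k1' : |evf m x a - evf m y a - (sx - sy)| ≤ 4 * (L * Q * d) := by
    refine (abs_sub _ _).trans ?_
    have := abs_sub (evf m x a) (evf m y a)
    linarith
  have a1 : |a (Sum.inl 1)| ≤ 4 * L * Q := by
    have : |a (Sum.inl 1)| * d ≤ 4 * L * Q * d := by
      rw [hdd, ← abs_mul, k1]; linarith
    exact le_of_mul_le_mul_right this hd0
  have a0 : |a (Sum.inl 0)| ≤ 4 * L * Q := by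
    have : a (Sum.inl 0) = evf m x a - a (Sum.inl 1) * x - sx := by rw [e1]; ring
    rw [this]
    have t1 := abs_sub (evf m x a - a (Sum.inl 1) * x) sx
    have t2 := abs_sub (evf m x a) (a (Sum.inl 1) * x)
    have t3 : |a (Sum.inl 1) * x| ≤ 4 * L * Q * (1 / 2) := by
      rw [abs_mul]; exact mul_le_mul a1 hx (abs_nonneg _) (by positivity)
    have t4 : L ≤ L * Q := le_mul_of_one_le_right hL.le hQ1
    linarith
  refine ⟨?_, ?_⟩
  · rintro (i | i)
    · fin_cases i
      · exact a0
      · exact a1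
    · exact (h3 i).trans (by linarith)
  · have : |dvf m x a| * d ≤ 7 * L * Q * d := by
      rw [hdv, hdd, ← abs_mul, add_mul, k1]
      refine (abs_add_le _ _).trans ?_
      rw [abs_mul se, ← hdd]
      have : |se| * d ≤ 3 * 1 * (L * Q) * d := mul_le_mul_of_nonneg_right hE hd0.le
      linarith
    exact le_of_mul_le_mul_right this hd0

noncomputable def matA (m : ℕ) (x y q1 q2 Q : ℝ) :
    Matrix (Fin 2 ⊕ Fin m) (Fin 2 ⊕ Fin m) ℝ :=
  Matrix.fromBlocks !![q1, q1 * x; q2, q2 * y]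
    (Matrix.of fun i k => ![q1, q2] i * ![x, y] i ^ ((k : ℕ) + 2)) 0 (Q⁻¹ • 1)

lemma matA_det (m : ℕ) (x y q1 q2 Q : ℝ) :
    (matA m x y q1 q2 Q).det = q1 * q2 * (y - x) * (Q ^ m)⁻¹ := by
  rw [matA, Matrix.det_fromBlocks_zero₂₁, Matrix.det_fin_two_of, Matrix.det_smul, Matrix.det_one,
    Fintype.card_fin, inv_pow]
  ring

lemma matA_0 (m : ℕ) (x y q1 q2 Q : ℝ) (a : Fin 2 ⊕ Fin m → ℝ) :
    (matA m x y q1 q2 Q).mulVec a (Sum.inl 0) = q1 * evf m x a := by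
  rw [evf_apply]
  simp only [matA, Matrix.mulVec, dotProduct, Fintype.sum_sum_type, Fin.sum_univ_two,
    Matrix.fromBlocks_apply₁₁, Matrix.fromBlocks_apply₁₂, mul_add, Finset.mul_sum]
  simp [ex]
  congr 1
  · ring
  · exact Finset.sum_congr rfl fun _ _ => by ring

lemma matA_1 (m : ℕ) (x y q1 q2 Q : ℝ) (a : Fin 2 ⊕ Fin m → ℝ) :
    (matA m x y q1 q2 Q).mulVec a (Sum.inl 1) = q2 * evf m y a := by
  rw [evf_apply]
  simp only [matA, Matrix.mulVec, dotProduct, Fintype.sum_sum_type, Fin.sum_univ_two,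
    Matrix.fromBlocks_apply₁₁, Matrix.fromBlocks_apply₁₂, mul_add, Finset.mul_sum]
  simp [ex]
  congr 1
  · ring
  · exact Finset.sum_congr rfl fun _ _ => by ring

lemma matA_r (m : ℕ) (x y q1 q2 Q : ℝ) (a : Fin 2 ⊕ Fin m → ℝ) (j : Fin m) :
    (matA m x y q1 q2 Q).mulVec a (Sum.inr j) = Q⁻¹ * a (Sum.inr j) := by
  rw [matA, Matrix.fromBlocks_mulVec]
  simp [Matrix.smul_mulVec]

lemma pow_taylor (x h : ℝ) (hx : |x| ≤ 1) (hxh : |x + h| ≤ 1) (j : ℕ) :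
    |(x + h) ^ j - x ^ j - j * x ^ (j - 1) * h| ≤ (j : ℝ) ^ 2 * h ^ 2 := by
  induction j with
  | zero => simp
  | succ k ih =>
    have e : (x + h) ^ (k + 1) - x ^ (k + 1) - ((k + 1 : ℕ) : ℝ) * x ^ (k + 1 - 1) * h
        = (x + h) * ((x + h) ^ k - x ^ k - k * x ^ (k - 1) * h) + k * x ^ (k - 1) * h ^ 2 := by
      rcases k with _ | k
      · simp
      · simp only [Nat.add_sub_cancel]; push_cast; ring
    rw [e]
    refine (abs_add_le _ _).trans ?_
    rw [abs_mul, abs_mul, abs_mul, abs_pow x, Nat.abs_cast, abs_of_nonneg (sq_nonneg h)]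
    have h1 : |x + h| * |(x + h) ^ k - x ^ k - k * x ^ (k - 1) * h| ≤ 1 * ((k : ℝ) ^ 2 * h ^ 2) :=
      mul_le_mul hxh ih (abs_nonneg _) zero_le_one
    have h2 : (k : ℝ) * |x| ^ (k - 1) * h ^ 2 ≤ k * 1 * h ^ 2 := by
      gcongr
      exact pow_le_one₀ (abs_nonneg _) hx
    have h3 : (0 : ℝ) ≤ k * h ^ 2 := by positivity
    push_cast
    nlinarith [sq_nonneg h]

lemma poly_taylor (F : ℤ[X]) (n : ℕ) (hF : F.natDegree ≤ n) (H : ℝ)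
    (hH : ∀ j, |(F.coeff j : ℝ)| ≤ H) (x h : ℝ) (hx : |x| ≤ 1) (hxh : |x + h| ≤ 1) :
    |aeval (x + h) F - aeval x F - h * aeval x (derivative F)| ≤
      (n + 1) * n ^ 2 * H * h ^ 2 := by
  have e1 : ∀ t : ℝ, aeval t F = ∑ j ∈ Finset.range (n + 1), (F.coeff j : ℝ) * t ^ j := by
    intro t
    rw [aeval_eq_sum_range' (Nat.lt_succ_of_le hF)]
    simp
  have e2 : aeval x (derivative F) =
      ∑ j ∈ Finset.range (n + 1), (F.coeff j : ℝ) * (j * x ^ (j - 1)) := by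
    conv_lhs => rw [F.as_sum_range' (n + 1) (Nat.lt_succ_of_le hF)]
    simp [derivative_monomial, aeval_monomial, mul_assoc]
  rw [e1, e1, e2, Finset.mul_sum, ← Finset.sum_sub_distrib, ← Finset.sum_sub_distrib]
  refine (Finset.abs_sum_le_sum_abs _ _).trans ?_
  calc _ ≤ ∑ j ∈ Finset.range (n + 1), n ^ 2 * H * h ^ 2 := by
        refine Finset.sum_le_sum fun j hj => ?_
        have : (F.coeff j : ℝ) * (x + h) ^ j - F.coeff j * x ^ j - h * (F.coeff j * (j * x ^ (j - 1)))
          = F.coeff j * ((x + h) ^ j - x ^ j - j * x ^ (j - 1) * h) := by ring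
        rw [this, abs_mul]
        have hH0 : 0 ≤ H := (abs_nonneg _).trans (hH 0)
        have hj' : (j : ℝ) ≤ n := by
          have := Finset.mem_range.1 hj
          exact_mod_cast Nat.lt_succ_iff.1 this
        calc _ ≤ H * ((j : ℝ) ^ 2 * h ^ 2) :=
              mul_le_mul (hH j) (pow_taylor x h hx hxh j) (abs_nonneg _) hH0
          _ ≤ H * ((n : ℝ) ^ 2 * h ^ 2) := by gcongr
          _ = _ := by ring
    _ = _ := by rw [Finset.sum_const, Finset.card_range, nsmul_eq_mul]; push_cast; ring

lemma root_near (F : ℤ[X]) (n : ℕ) (hF : F.natDegree ≤ n) (H : ℝ)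
    (hH : ∀ j, |(F.coeff j : ℝ)| ≤ H) (x r : ℝ) (hx : |x| ≤ 1 / 2) (hr : 0 < r) (hr' : r ≤ 1 / 2)
    (h : |aeval x F| + (n + 1) * n ^ 2 * H * r ^ 2 ≤ r * |aeval x (derivative F)|) :
    ∃ α : ℝ, aeval α F = 0 ∧ |x - α| ≤ r := by
  have t1 := poly_taylor F n hF H hH x r (by linarith) ((abs_add_le _ _).trans (by
    rw [abs_of_pos hr]; linarith))
  have t2 := poly_taylor F n hF H hH x (-r) (by linarith) ((abs_add_le _ _).trans (by
    rw [abs_neg, abs_of_pos hr]; linarith))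
  rw [neg_sq] at t2
  have hc : Continuous fun t : ℝ => aeval t F := F.continuous_aeval
  have h0 : (0 : ℝ) ∈ Set.uIcc (aeval (x + -r) F) (aeval (x + r) F) := by
    rw [Set.mem_uIcc]
    rw [abs_le] at t1 t2
    have t3 := neg_abs_le (aeval x F)
    have t4 := le_abs_self (aeval x F)
    rcases abs_cases (aeval x (derivative F)) with ⟨e, _⟩ | ⟨e, _⟩ <;> rw [e] at h
    · left; constructor <;> nlinarith
    · right; constructor <;> nlinarith
  obtain ⟨α, hα, hα'⟩ := intermediate_value_uIcc hc.continuousOn h0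
  refine ⟨α, hα', ?_⟩
  rw [Set.uIcc_of_le (by linarith)] at hα
  rw [abs_le]
  constructor <;> linarith [hα.1, hα.2]

lemma eisen (m : ℕ) (hm : 2 ≤ m) (z : Fin 2 ⊕ Fin m → ℤ) (F : ℤ[X])
    (hF : F = X ^ (m + 2) + C 2 + C 4 * pol z) :
    F.Monic ∧ F.natDegree = m + 2 ∧ Irreducible (F.map (algebraMap ℤ ℚ)) := by
  have hc : ∀ j, F.coeff j = (if j = m + 2 then 1 else 0) + (if j = 0 then 2 else 0)
      + 4 * (pol z).coeff j := by
    intro j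
    rw [hF, coeff_add, coeff_add, coeff_X_pow, coeff_C, coeff_C_mul]
  have hd1 : F.natDegree ≤ m + 2 := by
    refine natDegree_le_iff_coeff_eq_zero.2 fun j hj => ?_
    rw [hc, pol_coeff_ge z j (by omega), if_neg (by omega), if_neg (by omega)]; rfl
  have hlead : F.coeff (m + 2) = 1 := by
    rw [hc, pol_coeff_ge z _ le_rfl]; simp
  have hmon : F.Monic := monic_of_natDegree_le_of_coeff_eq_one _ hd1 hlead
  have hd : F.natDegree = m + 2 :=
    le_antisymm hd1 (le_natDegree_of_ne_zero (by rw [hlead]; exact one_ne_zero))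
  refine ⟨hmon, hd, ?_⟩
  rw [← hmon.irreducible_iff_irreducible_map_fraction_map]
  refine IsEisensteinAt.irreducible (𝓟 := Ideal.span {2}) ⟨?_, ?_, ?_⟩ ?_ hmon.isPrimitive (by omega)
  · rw [hmon.leadingCoeff, Ideal.mem_span_singleton]; norm_num
  · intro j hj
    rw [Ideal.mem_span_singleton, hc, if_neg (by omega)]
    split_ifs <;> omega
  · rw [Ideal.span_singleton_pow, Ideal.mem_span_singleton, hc, if_neg (by omega)]
    simp only [if_true]
    omega
  · rw [Ideal.span_singleton_prime two_ne_zero]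
    exact Int.prime_two

lemma target (m : ℕ) (hm : 2 ≤ m) (x y K : ℝ) (hx : |x| ≤ 1 / 2) (hy : |y| ≤ 1 / 2) (hK : 0 ≤ K) :
    ∃ q : Fin 2 ⊕ Fin m → ℝ, (∀ i, |q i| ≤ 3 * K + 4) ∧
      evf m x q = - x ^ (m + 2) - 2 ∧ evf m y q = - y ^ (m + 2) - 2 ∧
      dvf m x q = (x - y) * (x ^ m + K) - (m + 2) * x ^ (m + 1) ∧
      dvf m y q = (y - x) * (y ^ m + K) - (m + 2) * y ^ (m + 1) := by
  let R : ℝ[X] := C (-(x + y)) * X ^ (m + 1) + C (x * y) * X ^ m + C K * X ^ 2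
    + C (-(K * (x + y))) * X ^ 1 + C (K * (x * y)) * X ^ 0 + C (-2) * X ^ 0
  have hc : ∀ j, R.coeff j = (if j = m + 1 then -(x + y) else 0) + (if j = m then x * y else 0)
      + (if j = 2 then K else 0) + (if j = 1 then -(K * (x + y)) else 0)
      + (if j = 0 then K * (x * y) else 0) + (if j = 0 then -2 else 0) := by
    intro j
    simp only [R, coeff_add, coeff_C_mul_X_pow]
  have hR : R = pol (m := m) (fun i => R.coeff (ex i)) := pol_of R (fun j hj => by
    rw [hc]
    repeat rw [if_neg (by omega)]
    simp)
  have hxy : |x + y| ≤ 1 := (abs_add_le _ _).trans (by linarith)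
  have hxy' : |x * y| ≤ 1 := by
    rw [abs_mul]; nlinarith [abs_nonneg x, abs_nonneg y]
  have key : ∀ (p : Prop) [Decidable p] (a B : ℝ), |a| ≤ B → |if p then a else 0| ≤ B := by
    intro p _ a B h
    split_ifs
    · exact h
    · simpa using (abs_nonneg a).trans h
  have hev : ∀ t, evf m t (fun i => R.coeff (ex i)) = R.eval t := fun t => by
    rw [← eval_pol, ← hR]
  have hdv : ∀ t, dvf m t (fun i => R.coeff (ex i)) = (derivative R).eval t := fun t => by
    rw [← eval_der_pol, ← hR]
  obtain ⟨k, rfl⟩ : ∃ k, m = k + 1 := ⟨m - 1, by omega⟩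
  refine ⟨fun i => R.coeff (ex i), fun i => ?_, ?_, ?_, ?_, ?_⟩
  · change |R.coeff (ex i)| ≤ _
    rw [hc]
    have k1 := key (ex i = k + 1 + 1) (-(x + y)) 1 (by rwa [abs_neg])
    have k2 := key (ex i = k + 1) (x * y) 1 hxy'
    have k3 := key (ex i = 2) K K (abs_of_nonneg hK).le
    have k4 := key (ex i = 1) (-(K * (x + y))) K (by
      rw [abs_neg, abs_mul, abs_of_nonneg hK]; exact mul_le_of_le_one_right hK hxy)
    have k5 := key (ex i = 0) (K * (x * y)) K (by
      rw [abs_mul, abs_of_nonneg hK]; exact mul_le_of_le_one_right hK hxy')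
    have k6 := key (ex i = 0) (-2 : ℝ) 2 (by norm_num)
    rw [abs_le] at *
    constructor <;> linarith
  · rw [hev]; simp [R]; ring
  · rw [hev]; simp [R]; ring
  · rw [hdv]; simp [R]; ring
  · rw [hdv]; simp [R]; ring

lemma fact_bound (n : ℕ) (hn : 4 ≤ n) : n * 8 ^ n ≤ (n + 4).factorial := by
  have h : 8 ^ n ≤ (n + 3).factorial := by
    induction n, hn using Nat.le_induction with
    | base => decide
    | succ k hk ih =>
      rw [show k + 1 + 3 = (k + 3) + 1 by ring, Nat.factorial_succ, pow_succ, mul_comm]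
      exact Nat.mul_le_mul (by omega) ih
  rw [show n + 4 = (n + 3) + 1 by ring, Nat.factorial_succ]
  exact Nat.mul_le_mul (by omega) h

lemma half (F : ℤ[X]) (n : ℕ) (hn : 4 ≤ n) (hF : F.natDegree ≤ n) (d D E Q q ε x : ℝ)
    (hE : 0 < E) (hD : 1 ≤ D) (hQ : 1 ≤ Q) (hQ8 : 8 ≤ Q) (hq : 0 < q) (hq1 : q ≤ 1) (hd : ε < d)
    (hε : 0 < ε) (hQε : 496 * (n + 1) * n ^ 2 ≤ Q * ε) (hx : |x| ≤ 1 / 2)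
    (hH : ∀ j, |(F.coeff j : ℝ)| ≤ 62 * n * E * D * Q)
    (h1 : |aeval x F| ≤ 2 * n * (E * d * D) * q)
    (h2 : n * (E * d * D) * Q ≤ |aeval x (derivative F)|) :
    ∃ α : ℝ, aeval α F = 0 ∧ |x - α| < n * (2 * n + 1) * D * (q / Q) := by
  have hn' : (4 : ℝ) ≤ n := by exact_mod_cast hn
  have hQ0 : 0 < Q := by linarith
  have hd0 : 0 < d := hε.trans hd
  have hD0 : 0 < D := by linarith
  obtain ⟨α, h3, h4⟩ := root_near F n hF _ hH x (4 * (q / Q)) hx (by positivity) (by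
    have : q / Q ≤ 1 / 8 := by
      rw [div_le_div_iff₀ hQ0 (by norm_num)]; linarith
    linarith) (by
    have e1 : n * (E * d * D) * Q * (4 * (q / Q)) = 4 * n * (E * d * D) * q := by
      field_simp
    have e2 : ((n : ℝ) + 1) * n ^ 2 * (62 * n * E * D * Q) * (4 * (q / Q)) ^ 2
        = (2 * n * (E * D) * q) * ((496 * (n + 1) * n ^ 2) * q / Q) := by
      field_simp; ring
    have e3 : (496 * ((n : ℝ) + 1) * n ^ 2) * q / Q ≤ d := by
      rw [div_le_iff₀ hQ0]
      have : (496 * ((n : ℝ) + 1) * n ^ 2) * q ≤ (496 * ((n : ℝ) + 1) * n ^ 2) * 1 := by gcongr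
      nlinarith
    have e4 : (2 * n * (E * D) * q) * ((496 * (n + 1) * n ^ 2) * q / Q) ≤
        (2 * n * (E * D) * q) * d := by gcongr
    have e5 : 4 * (q / Q) * (n * (E * d * D) * Q) ≤ 4 * (q / Q) * |aeval x (derivative F)| := by
      gcongr
    rw [e2]
    linarith)
  refine ⟨α, h3, h4.trans_lt ?_⟩
  have : 0 < q / Q := by positivity
  gcongr
  nlinarith

set_option maxHeartbeats 2000000 in
theorem exists_algebraic_integer_point_near_generic_point (n : ℕ) (hn : 4 ≤ n)
    (ε : ℝ) (hε : 0 < ε)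
    (u₁ u₂ : ℝ) (hu₁ : 0 < u₁) (hu₂ : 0 < u₂) (hu : u₁ + u₂ = (n : ℝ) - 2)
    (δ₀ : ℝ) (hδ₀ : 0 < δ₀) (hδ₀' : δ₀ < 1) :
    ∃ Q₀ : ℕ, ∀ Q : ℕ, Q₀ < Q →
      ∀ x₀ y₀ : ℝ, x₀ ∈ Set.Icc (-(1/2) : ℝ) (1/2) →
        y₀ ∈ Set.Icc (-(1/2) : ℝ) (1/2) → ε < |x₀ - y₀| →
        (∀ P : ℤ[X], P ≠ 0 → P.natDegree ≤ n - 1 →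
          (∀ j, |P.coeff j| ≤ (Q : ℤ)) →
          |Polynomial.aeval x₀ P| < (Q : ℝ) ^ (-u₁) →
          |Polynomial.aeval y₀ P| < (Q : ℝ) ^ (-u₂) →
          δ₀ * (Q : ℝ) ≤ |Polynomial.aeval x₀ (derivative P)| ∧
            δ₀ * (Q : ℝ) ≤ |Polynomial.aeval y₀ (derivative P)|) →
        ∃ P : ℤ[X], P.Monic ∧ P.natDegree = n ∧
          Irreducible (P.map (algebraMap ℤ ℚ)) ∧
          (∀ j, (|P.coeff j| : ℝ) <
            2 * 10 ^ 4 * (Nat.factorial (n + 4) : ℝ) * (δ₀ ^ (n - 1))⁻¹ * (Q : ℝ)) ∧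
          ∃ α β : ℝ, Polynomial.aeval α P = 0 ∧ Polynomial.aeval β P = 0 ∧
            |x₀ - α| < (n : ℝ) * (2 * n + 1) * (δ₀ ^ (n - 1))⁻¹ * (Q : ℝ) ^ (-u₁ - 1) ∧
            |y₀ - β| < (n : ℝ) * (2 * n + 1) * (δ₀ ^ (n - 1))⁻¹ * (Q : ℝ) ^ (-u₂ - 1) := by
  refine ⟨⌈496 * ((n : ℝ) + 1) * n ^ 2 / ε⌉₊ + 8, ?_⟩
  intro Q hQ x y hx hy hxy hyp
  have hfac : ((n : ℝ) * 8 ^ n) ≤ (Nat.factorial (n + 4) : ℝ) := by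
    exact_mod_cast fact_bound n hn
  obtain ⟨m, rfl⟩ : ∃ m, n = m + 2 := ⟨n - 2, by omega⟩
  have hm : 2 ≤ m := by omega
  replace hx : |x| ≤ 1 / 2 := abs_le.2 ⟨hx.1, hx.2⟩
  replace hy : |y| ≤ 1 / 2 := abs_le.2 ⟨hy.1, hy.2⟩
  have hQ8 : (8 : ℝ) ≤ Q := by
    have : 8 ≤ Q := by omega
    exact_mod_cast this
  have hQ1 : (1 : ℝ) ≤ Q := by linarith
  have hQ0 : (0 : ℝ) < Q := by linarith
  have hQε : 496 * (((m + 2 : ℕ) : ℝ) + 1) * ((m + 2 : ℕ) : ℝ) ^ 2 ≤ Q * ε := by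
    rw [← div_le_iff₀ hε]
    refine (Nat.le_ceil _).trans ?_
    exact Nat.cast_le.2 (by omega)
  have hn4 : (4 : ℝ) ≤ ((m + 2 : ℕ) : ℝ) := by exact_mod_cast hn
  have hQ2 : 2 ≤ Q * ε := by
    refine le_trans ?_ hQε
    nlinarith
  have hyx : ε < |y - x| := by rwa [abs_sub_comm]
  have hd0 : 0 < |x - y| := hε.trans hxy
  have hd1 : |x - y| ≤ 1 := (abs_sub _ _).trans (by linarith)
  set d := |x - y| with hd
  set D : ℝ := (δ₀ ^ (m + 2 - 1))⁻¹ with hDdef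
  have hD1 : 1 ≤ D := (one_le_inv₀ (by positivity)).2 (pow_le_one₀ hδ₀.le hδ₀'.le)
  have hD0 : 0 < D := by linarith
  set E : ℝ := 8 ^ (m + 2) with hE
  have hE1 : 1 ≤ E := one_le_pow₀ (by norm_num)
  have hE0 : 0 < E := by linarith
  set N : ℝ := ((m + 2 : ℕ) : ℝ) with hN
  have hN0 : 0 < N := by linarith
  set q1 : ℝ := (Q : ℝ) ^ (-u₁) with hq1
  set q2 : ℝ := (Q : ℝ) ^ (-u₂) with hq2
  have hq1p : 0 < q1 := Real.rpow_pos_of_pos hQ0 _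
  have hq2p : 0 < q2 := Real.rpow_pos_of_pos hQ0 _
  have hq1l : q1 ≤ 1 := Real.rpow_le_one_of_one_le_of_nonpos hQ1 (by linarith)
  have hq2l : q2 ≤ 1 := Real.rpow_le_one_of_one_le_of_nonpos hQ1 (by linarith)
  have hq12 : q1 * q2 = ((Q : ℝ) ^ m)⁻¹ := by
    rw [hq1, hq2, ← Real.rpow_add hQ0, ← Real.rpow_natCast, ← Real.rpow_neg hQ0.le]
    congr 1
    rw [hN] at hu
    push_cast at hu
    linarith
  set A := matA m x y q1⁻¹ q2⁻¹ Q with hA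
  have hdetA : |A.det| = d := by
    have : A.det = y - x := by
      rw [hA, matA_det, ← hq12]
      field_simp
    rw [this, abs_sub_comm]
  -- bounds for vectors in the box
  have box : ∀ (z : Fin 2 ⊕ Fin m → ℤ) (L : ℝ),
      (∀ i, |(A.mulVec (fun j => (z j : ℝ))) i| < L) →
      |evf m x (fun j => (z j : ℝ))| < L * q1 ∧ |evf m y (fun j => (z j : ℝ))| < L * q2 ∧
      (∀ i, |(z i : ℝ)| ≤ 4 * L * Q) ∧ |dvf m x (fun j => (z j : ℝ))| ≤ 7 * L * Q ∧
      |dvf m y (fun j => (z j : ℝ))| ≤ 7 * L * Q := by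
    intro z L h
    have hL : 0 < L := (abs_nonneg _).trans_lt (h (Sum.inl 0))
    have b1 := h (Sum.inl 0)
    have b2 := h (Sum.inl 1)
    rw [hA, matA_0, abs_mul, abs_of_pos (by positivity), inv_mul_lt_iff₀ hq1p, mul_comm] at b1
    rw [hA, matA_1, abs_mul, abs_of_pos (by positivity), inv_mul_lt_iff₀ hq2p, mul_comm] at b2
    have b3 : ∀ j, |((z (Sum.inr j) : ℤ) : ℝ)| ≤ L * Q := by
      intro j
      have := h (Sum.inr j)
      rw [hA, matA_r, abs_mul, abs_of_pos (by positivity), inv_mul_lt_iff₀ hQ0, mul_comm] at this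
      exact this.le
    have c1 : L * q1 ≤ L := mul_le_of_le_one_right hL.le hq1l
    have c2 : L * q2 ≤ L := mul_le_of_le_one_right hL.le hq2l
    have s1 := small_bound m (fun j => (z j : ℝ)) x y ε Q L hx hy hε hxy hQ2 hQ1 hL
      (b1.le.trans c1) (b2.le.trans c2) b3
    have s2 := small_bound m (fun j => (z j : ℝ)) y x ε Q L hy hx hε hyx hQ2 hQ1 hL
      (b2.le.trans c2) (b1.le.trans c1) b3
    exact ⟨b1, b2, s1.1, s1.2, s2.2⟩
  have hspan := span_lemma A (by rw [← abs_pos, hdetA]; exact hd0) (δ₀ / 8) (E * d * D)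
    (by positivity) (by positivity) (by
      intro z hz h
      obtain ⟨b1, b2, b3, b4, b5⟩ := box z _ h
      have := (hyp (pol z) ?_ ?_ ?_ ?_ ?_).1
      · rw [aeval_der_pol] at this
        nlinarith
      · intro h0
        apply hz
        funext i
        rw [← pol_coeff_ex z i, h0]; simp
      · exact pol_natDegree z
      · intro j
        by_cases hj : j < m + 2
        · obtain ⟨i, rfl⟩ := ex_surj hj
          rw [pol_coeff_ex]
          have := b3 i
          have : |(z i : ℝ)| ≤ Q := by nlinarith
          exact_mod_cast this
        · rw [pol_coeff_ge _ _ (by omega)]; simp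
      · rw [aeval_pol]
        refine b1.trans ?_
        nlinarith
      · rw [aeval_pol]
        refine b2.trans ?_
        nlinarith) (by
      rw [hdetA, Fintype.card_sum, Fintype.card_fin, Fintype.card_fin, hE, hDdef,
        show 2 + m - 1 = m + 1 by omega, show m + 2 - 1 = m + 1 by omega, div_pow]
      have : δ₀ ^ (m + 1) / 8 ^ (m + 1) * (8 ^ (m + 2) * d * (δ₀ ^ (m + 1))⁻¹) = 8 * d := by
        field_simp; ring
      rw [this]; linarith)
  set K : ℝ := 16 * N * E * D * Q with hK
  have hK0 : 0 ≤ K := by positivity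
  obtain ⟨q, hqb, hqx, hqy, hdx, hdy⟩ := target m hm x y K hx hy hK0
  obtain ⟨z, hz⟩ := cover_lemma _ hspan ((4 : ℝ)⁻¹ • q)
  have hcard : ((Fintype.card (Fin 2 ⊕ Fin m) : ℕ) : ℝ) = N := by
    rw [Fintype.card_sum, Fintype.card_fin, Fintype.card_fin, hN, add_comm]
  rw [hcard] at hz
  have hz' : ∀ (h : (Fin 2 ⊕ Fin m → ℝ) →ₗ[ℝ] ℝ) (B : ℝ),
      (∀ v : Fin 2 ⊕ Fin m → ℤ, (∀ i, |(A.mulVec (fun j => (v j : ℝ))) i| < E * d * D) →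
        |h (fun j => (v j : ℝ))| ≤ B) →
      |h q - 4 * h (fun j => (z j : ℝ))| ≤ 2 * N * B := by
    intro h B hB
    have := hz h B hB
    rw [map_smul, smul_eq_mul] at this
    have e : h q - 4 * h (fun j => (z j : ℝ)) = 4 * (4⁻¹ * h q - h (fun j => (z j : ℝ))) := by ring
    rw [e, abs_mul, abs_of_pos (by norm_num : (0 : ℝ) < 4)]
    linarith
  have zx := hz' (evf m x) (E * d * D * q1) (fun v hv => (box v _ hv).1.le)
  have zy := hz' (evf m y) (E * d * D * q2) (fun v hv => (box v _ hv).2.1.le)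
  have zc := fun i => hz' (LinearMap.proj i) (4 * (E * d * D) * Q) (fun v hv => (box v _ hv).2.2.1 i)
  have zdx := hz' (dvf m x) (7 * (E * d * D) * Q) (fun v hv => (box v _ hv).2.2.2.1)
  have zdy := hz' (dvf m y) (7 * (E * d * D) * Q) (fun v hv => (box v _ hv).2.2.2.2)
  let F : ℤ[X] := X ^ (m + 2) + C 2 + C 4 * pol z
  obtain ⟨hmon, hdeg, hirr⟩ := eisen m hm z F rfl
  have hFe : ∀ t : ℝ, aeval t F = t ^ (m + 2) + 2 + 4 * evf m t (fun j => (z j : ℝ)) := by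
    intro t
    simp only [F, map_add, map_mul, map_pow, aeval_X, aeval_C, aeval_pol]
    simp
  have hFd : ∀ t : ℝ, aeval t (derivative F) =
      (m + 2) * t ^ (m + 1) + 4 * dvf m t (fun j => (z j : ℝ)) := by
    intro t
    simp only [F, derivative_add, derivative_C, derivative_C_mul, derivative_X_pow, map_add, map_mul, map_pow, aeval_X, aeval_C, aeval_der_pol, map_zero]
    simp
    try ring
  have hbig : 1 ≤ N * E * D * Q := by
    have : 1 ≤ N := by linarith
    exact one_le_mul_of_one_le_of_one_le (one_le_mul_of_one_le_of_one_le
      (one_le_mul_of_one_le_of_one_le this hE1) hD1) hQ1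
  have hNd : N * (E * d * D) * Q ≤ N * E * D * Q := by
    have : N * (E * d * D) * Q = (N * E * D * Q) * d := by ring
    rw [this]
    exact mul_le_of_le_one_right (by positivity) hd1
  have hH : ∀ j, |(F.coeff j : ℝ)| ≤ 62 * N * E * D * Q := by
    intro j
    have hc : F.coeff j = (if j = m + 2 then 1 else 0) + (if j = 0 then 2 else 0)
        + 4 * (pol z).coeff j := by
      simp only [F]
      rw [coeff_add, coeff_add, coeff_X_pow, coeff_C, coeff_C_mul]
    rw [hc]
    by_cases hj : j < m + 2
    · obtain ⟨i, rfl⟩ := ex_surj hj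
      rw [pol_coeff_ex, if_neg (by omega)]
      have h1 := zc i
      have h2 := hqb i
      simp only [LinearMap.proj_apply] at h1
      have h3 : |4 * (z i : ℝ)| ≤ 3 * K + 4 + 2 * N * (4 * (E * d * D) * Q) := by
        rw [abs_le] at *
        constructor <;> linarith
      have h4 : |((if ex i = 0 then (2 : ℤ) else 0 : ℤ) : ℝ)| ≤ 2 := by
        split_ifs <;> norm_num
      push_cast at h4 ⊢
      rw [zero_add]
      refine (abs_add_le _ _).trans ?_
      rw [hK] at h3
      linarith
    · rw [pol_coeff_ge _ _ (by omega), if_neg (by omega : ¬ j = 0)]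
      have : |((if j = m + 2 then (1 : ℤ) else 0 : ℤ) : ℝ)| ≤ 1 := by
        split_ifs <;> norm_num
      push_cast at this ⊢
      simp only [add_zero, mul_zero]
      linarith
  -- derivative lower bounds
  have der : ∀ t s : ℝ, |t| ≤ 1 / 2 → |t - s| = d →
      dvf m t q = (t - s) * (t ^ m + K) - (m + 2) * t ^ (m + 1) →
      |dvf m t q - 4 * dvf m t (fun j => (z j : ℝ))| ≤ 2 * N * (7 * (E * d * D) * Q) →
      N * (E * d * D) * Q ≤ |aeval t (derivative F)| := by
    intro t s ht hts h1 h2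
    have e : aeval t (derivative F) =
        (t - s) * (t ^ m + K) - (dvf m t q - 4 * dvf m t (fun j => (z j : ℝ))) := by
      rw [hFd, h1]; ring
    have h3 : d * (K - 1) ≤ |(t - s) * (t ^ m + K)| := by
      rw [abs_mul, hts]
      refine mul_le_mul_of_nonneg_left ?_ hd0.le
      have h4 : |t ^ m| ≤ 1 := by
        rw [abs_pow]; exact pow_le_one₀ (abs_nonneg _) (by linarith)
      have h5 := neg_abs_le (t ^ m)
      refine le_trans ?_ (le_abs_self _)
      linarith
    have h6 := abs_sub_abs_le_abs_sub ((t - s) * (t ^ m + K))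
      (dvf m t q - 4 * dvf m t (fun j => (z j : ℝ)))
    rw [e]
    have h7 : d * K = 16 * (N * (E * d * D) * Q) := by rw [hK]; ring
    have h8 : d ≤ N * (E * d * D) * Q := by
      have : N * (E * d * D) * Q = (N * E * D * Q) * d := by ring
      rw [this]
      exact le_mul_of_one_le_left hd0.le hbig
    linarith
  have dx := der x y hx rfl hdx zdx
  have dy := der y x hy (abs_sub_comm _ _) hdy zdy
  obtain ⟨α, hα, hα'⟩ := half F (m + 2) hn hdeg.le d D E Q q1 ε x hE0 hD1 hQ1 hQ8 hq1p hq1l hxy hε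
    hQε hx hH (by
      rw [hFe]
      rw [hqx] at zx
      rw [← abs_neg]
      convert zx using 1
      · congr 1; ring
      · ring) dx
  obtain ⟨β, hβ, hβ'⟩ := half F (m + 2) hn hdeg.le d D E Q q2 ε y hE0 hD1 hQ1 hQ8 hq2p hq2l hxy hε
    hQε hy hH (by
      rw [hFe]
      rw [hqy] at zy
      rw [← abs_neg]
      convert zy using 1
      · congr 1; ring
      · ring) dy
  refine ⟨F, hmon, hdeg, hirr, fun j => ?_, α, β, hα, hβ, ?_, ?_⟩
  · refine (hH j).trans_lt ?_
    have h1 : 62 * N * E * D * Q = 62 * (N * E) * (D * Q) := by ring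
    have h2 : 2 * 10 ^ 4 * (Nat.factorial (m + 2 + 4) : ℝ) * D * Q =
      2 * 10 ^ 4 * (Nat.factorial (m + 2 + 4) : ℝ) * (D * Q) := by ring
    rw [h1, h2]
    refine mul_lt_mul_of_pos_right ?_ (by positivity)
    have : 0 < N * E := by positivity
    linarith
  · rw [Real.rpow_sub_one hQ0.ne']; exact hα'
  · rw [Real.rpow_sub_one hQ0.ne']; exact hβ'
end
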